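/- arXiv:math/9812057 — 3 statements merged into one kernel-verified Lean document; each statement's English description precedes it below -/
import Mathlib

section
/- Let p be an odd prime and let r be an integer whose residue class generates the cyclic group of units (ℤ/p²)ˣ. Then for every positive integer m: if m is not divisible by p-1, then ν_p(r^m - 1) = 0, while if m is divisible by p-1, then ν_p(r^m - 1) = 1 + ν_p(m). -/
/-!
Since `r` generates `(ℤ/p²)ˣ`, its order modulo `p²` is `p(p-1)`, so `p² ∣ r^n - 1` forces
`p(p-1) ∣ n` (`mul_sub_one_dvd_of_sq_dvd`).

If `p ∣ r^m - 1`, then `p² ∣ r^(mp) - 1`, hence `p(p-1) ∣ mp` and `p - 1 ∣ m`; this settles the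
case `p - 1 ∤ m`. If `m = (p-1)n`, then `p` divides `r^(p-1) - 1` by Fermat's little theorem, while
`p²` does not, because `p(p-1) ∤ p - 1`. Lifting the exponent from `r^(p-1)` to its `n`-th power
gives `ν_p(r^m - 1) = 1 + ν_p(n)`, and `ν_p(n) = ν_p(m)` because `p ∤ p - 1`.
-/

/-- Expressing `-1 ≠ 1` as a power of `r` needs a positive exponent, so `r` is itself a unit. -/
lemma isUnit_of_generates (p : ℕ) (hp : p.Prime) (r : ℤ)
    (hr : ∀ v : (ZMod (p ^ 2))ˣ, ∃ j : ℕ, (v : ZMod (p ^ 2)) = (r : ZMod (p ^ 2)) ^ j) :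
    IsUnit (r : ZMod (p ^ 2)) := by
  obtain ⟨j, hj⟩ := hr (-1)
  have : Fact (2 < p ^ 2) := ⟨by nlinarith [hp.two_le]⟩
  have hj0 : j ≠ 0 := by
    rintro rfl
    simp only [Units.val_neg, Units.val_one, pow_zero] at hj
    exact ZMod.neg_one_ne_one hj
  rw [← isUnit_pow_iff hj0, ← hj]
  exact Units.isUnit _

lemma mul_sub_one_dvd_of_sq_dvd (p : ℕ) (hp : p.Prime) (r : ℤ)
    (hr : ∀ v : (ZMod (p ^ 2))ˣ, ∃ j : ℕ, (v : ZMod (p ^ 2)) = (r : ZMod (p ^ 2)) ^ j)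
    (n : ℕ) (hn : (p : ℤ) ^ 2 ∣ r ^ n - 1) : p * (p - 1) ∣ n := by
  have : NeZero (p ^ 2) := ⟨pow_ne_zero 2 hp.ne_zero⟩
  obtain ⟨u, hu⟩ := isUnit_of_generates p hp r hr
  have hgen : ∀ v : (ZMod (p ^ 2))ˣ, v ∈ Subgroup.zpowers u := by
    intro v
    obtain ⟨j, hj⟩ := hr v
    refine ⟨j, ?_⟩
    ext
    simp [hj, hu]
  have hord := orderOf_eq_card_of_forall_mem_zpowers hgen
  rw [Nat.card_eq_fintype_card, ZMod.card_units_eq_totient,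
    Nat.totient_prime_pow hp two_pos] at hord
  rw [show 2 - 1 = 1 from rfl, pow_one] at hord
  rw [← hord]
  apply orderOf_dvd_of_pow_eq_one
  ext
  have h : ((r ^ n - 1 : ℤ) : ZMod (p ^ 2)) = 0 := by
    rw [ZMod.intCast_zmod_eq_zero_iff_dvd]
    exact_mod_cast hn
  push_cast at h
  simpa [hu] using sub_eq_zero.mp h

/-- The divisibility `p ∣ r^m - 1` lifts to `p² ∣ r^(mp) - 1`, so the order `p(p-1)` divides `mp`. -/
lemma sub_one_dvd_of_dvd (p : ℕ) (hp : p.Prime) (r : ℤ)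
    (hr : ∀ v : (ZMod (p ^ 2))ˣ, ∃ j : ℕ, (v : ZMod (p ^ 2)) = (r : ZMod (p ^ 2)) ^ j)
    (m : ℕ) (h : (p : ℤ) ∣ r ^ m - 1) : p - 1 ∣ m := by
  have h2 := dvd_sub_pow_of_dvd_sub h 1
  rw [pow_one, one_pow, ← pow_mul] at h2
  have h3 := mul_sub_one_dvd_of_sq_dvd p hp r hr _ h2
  rw [mul_comm m p] at h3
  exact Nat.dvd_of_mul_dvd_mul_left hp.pos h3

/-- If `p` is an odd prime and `r` is an integer whose residue class generates the
cyclic group of units `(ℤ/p²)ˣ`, then for every positive integer `m`: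
`ν_p(r^m - 1) = 0` if `(p-1) ∤ m`, and `ν_p(r^m - 1) = 1 + ν_p(m)` if `(p-1) ∣ m`. -/
theorem stmt0 (p : ℕ) (hp : p.Prime) (hodd : Odd p) (r : ℤ)
    (hr : ∀ v : (ZMod (p ^ 2))ˣ, ∃ j : ℕ, (v : ZMod (p ^ 2)) = (r : ZMod (p ^ 2)) ^ j)
    (m : ℕ) (hm : 0 < m) :
    (¬ (p - 1) ∣ m → padicValInt p (r ^ m - 1) = 0) ∧
    ((p - 1) ∣ m → padicValInt p (r ^ m - 1) = 1 + padicValNat p m) := by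
  have : Fact p.Prime := ⟨hp⟩
  refine ⟨fun h => padicValInt.eq_zero_of_not_dvd fun hd =>
    h (sub_one_dvd_of_dvd p hp r hr m hd), ?_⟩
  rintro ⟨n, rfl⟩
  have hp1 : 0 < p - 1 := Nat.sub_pos_of_lt hp.one_lt
  have hn : n ≠ 0 := by rintro rfl; simp at hm
  have hcop : IsCoprime r (p : ℤ) := by
    have h := (ZMod.coe_int_isUnit_iff_isCoprime r (p ^ 2)).mp (isUnit_of_generates p hp r hr)
    push_cast at h
    exact ((IsCoprime.pow_left_iff two_pos).mp h).symm
  have hdvd : (p : ℤ) ∣ r ^ (p - 1) - 1 :=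
    (Int.ModEq.pow_card_sub_one_eq_one hp hcop).symm.dvd
  have hsq : ¬ (p : ℤ) ^ 2 ∣ r ^ (p - 1) - 1 := fun h => by
    have h1 := Nat.le_of_dvd hp1 (mul_sub_one_dvd_of_sq_dvd p hp r hr _ h)
    nlinarith [hp.two_le]
  have hpr : ¬ (p : ℤ) ∣ r ^ (p - 1) := fun h => by
    have h1 : (p : ℤ) ∣ 1 := (dvd_sub_right h).mp hdvd
    exact (Nat.prime_iff_prime_int.mp hp).not_isUnit (isUnit_of_dvd_one h1)
  have hmul : emultiplicity (p : ℤ) (r ^ (p - 1) - 1) = 1 := by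
    have := (emultiplicity_eq_coe (a := (p : ℤ)) (b := r ^ (p - 1) - 1) (n := 1)).mpr
      ⟨by simpa using hdvd, hsq⟩
    simpa using this
  have hlte := Int.emultiplicity_pow_sub_pow hp hodd hdvd hpr n
  rw [one_pow, ← pow_mul, hmul, ← padicValNat_eq_emultiplicity hn] at hlte
  have hval : padicValNat p ((p - 1) * n) = padicValNat p n := by
    rw [padicValNat.mul hp1.ne' hn,
      padicValNat.eq_zero_of_not_dvd (Nat.not_dvd_of_pos_of_lt hp1 (Nat.sub_lt hp.pos one_pos)),
      zero_add]
  have hne : r ^ ((p - 1) * n) - 1 ≠ 0 := by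
    intro h0
    rw [h0, emultiplicity_zero] at hlte
    exact absurd hlte.symm (by exact_mod_cast ENat.natCast_ne_top (1 + padicValNat p n))
  rw [hval, padicValInt.of_ne_one_ne_zero hp.ne_one hne]
  exact multiplicity_eq_of_emultiplicity_eq_some (by exact_mod_cast hlte)
end

section
/- Let p be an odd prime, r an integer whose residue class generates (ℤ/p²)ˣ, u a unit of ℤ_(p), and n ≥ 1, t ≥ 1 integers with t not divisible by p. For an integer m, let Q_m be the quotient of the free ℤ_(p)-module on two generators x, y by the submodule generated by the four elements p^{n+t(p-1)}·y; p^n·x + u·p^{n-1}(p^{t(p-1)}-1)·y; (r^{n+t(p-1)} - r^m)·y; and (r^n - r^m)·x + (u/p)·r^n(r^{t(p-1)}-1)·y. Then Q_m = 0 if m is not congruent to n modulo p-1; and if m = n + (p-1)i for an integer i, then Q_m is cyclic of order p^e, where e = min(ν_p(i)+2, n) if i is not congruent to t mod p; e = min(ν_p(i-t)+2, t(p-1)+n) if i ≡ t mod p and n > 1; and e = min(ν_p(i - t - t·p^{t(p-1)})+1, t(p-1)+2) if i ≡ t mod p and n = 1. -/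
/-!
Fermat quotients drive the computation. Put `X = r ^ (p - 1) = 1 + p κ`; since `r` generates
`(ℤ/p²)ˣ`, `κ` is a unit of `ℤ_(p)` (`gen_fermat_quotient`), and since `p` is odd,
`X ^ (p ^ k j) - 1 = p ^ (k + 1) (κ j + O(p))` for every integer `j` (`units_zpow_sub_one`).

As `p ∤ t`, the coefficient `w = (u / p) r ^ n (r ^ T - 1)` of `y` in the fourth relation is a unit,
where `T = t (p - 1)`. So `y` can be eliminated and the quotient is cyclic, namely `ℤ_(p)` modulo
the determinants of the other three relations with the fourth (`quot_equiv`).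

If `p - 1 ∤ m - n`, then `r ^ n - r ^ m` and `r ^ (n + T) - r ^ m` are units (`gen_order`), hence so
is one of the determinants. If `m = n + (p - 1) i`, the determinants are, up to units,
`p ^ (n + T) (X ^ i - 1)`, `p ^ (n - 1) (X ^ t - X ^ i + p ^ T (X ^ i - 1))` and
`(X ^ t - X ^ i) (X ^ i - 1)`, and the expansion above gives the least of their valuations
(`det_min`). Cancellation between the two terms of the second determinant affects the minimum only
for `n = 1` and `p ∣ i - t`; there its leading term is `-κ p (i - t - t p ^ T)`.
-/

set_option synthInstance.maxHeartbeats 1000000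
set_option maxHeartbeats 1000000

noncomputable section

/-- The `p`-adic valuation of an integer, valued in `ℕ∞`, with `ν_p 0 = ⊤`. -/
def nuE (p : ℕ) (x : ℤ) : ℕ∞ :=
  if x = 0 then ⊤ else (padicValInt p x : ℕ∞)

/-- The localization `ℤ_(p)` of the integers at the prime `p`, realized as the subring
of `ℚ` consisting of fractions whose denominator is prime to `p`. -/
def ZLoc (p : ℕ) [hp : Fact p.Prime] : Subring ℚ where
  carrier := {q : ℚ | ¬ (p : ℕ) ∣ q.den}
  zero_mem' := by simp [Rat.den_zero, Nat.dvd_one, hp.out.ne_one]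
  one_mem' := by simp [Rat.den_one, Nat.dvd_one, hp.out.ne_one]
  add_mem' := by
    intro a b ha hb hd
    rcases (Nat.Prime.dvd_mul hp.out).mp (hd.trans (Rat.add_den_dvd a b)) with h | h
    · exact ha h
    · exact hb h
  mul_mem' := by
    intro a b ha hb hd
    rcases (Nat.Prime.dvd_mul hp.out).mp (hd.trans (Rat.mul_den_dvd a b)) with h | h
    · exact ha h
    · exact hb h
  neg_mem' := by
    intro a ha hd
    rw [Rat.neg_den] at hd
    exact ha hd

/-- The free `ℤ_(p)`-module on two generators `x = ![1,0]`, `y = ![0,1]`,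
realized as a lattice in `ℚ²`. -/
def latt2 (p : ℕ) [Fact p.Prime] : Submodule (ZLoc p) (Fin 2 → ℚ) :=
  Submodule.span (ZLoc p) {![1, 0], ![0, 1]}

/-- The quotient of the free `ℤ_(p)`-module on two generators by the submodule
generated by the relations in `s`. -/
abbrev QuotMod2 (p : ℕ) [Fact p.Prime] (s : Set (Fin 2 → ℚ)) : Type :=
  ↥(latt2 p) ⧸ Submodule.comap (latt2 p).subtype (Submodule.span (ZLoc p) s)

/-! ### Arithmetic of `ℤ_(p)` -/

namespace ZLoc

variable {p : ℕ} [hp : Fact p.Prime]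

lemma norm_le (z : ZLoc p) : ‖((z : ℚ) : ℚ_[p])‖ ≤ 1 :=
  Padic.norm_rat_le_one z.2

lemma mem_of_norm_le {q : ℚ} (h : ‖(q : ℚ_[p])‖ ≤ 1) : q ∈ ZLoc p := by
  intro hd
  have hnum : ¬ ((p : ℤ) ∣ q.num) := by
    intro hn
    have h1 : p ∣ q.num.natAbs := Int.natCast_dvd.mp hn
    have := Nat.dvd_gcd h1 hd
    rw [q.reduced.gcd_eq_one] at this
    exact hp.out.ne_one (Nat.dvd_one.mp this)
  have h2 : ‖((q.num : ℤ) : ℚ_[p])‖ = 1 := by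
    refine le_antisymm (Padic.norm_int_le_one _) (not_lt.mp fun hlt => hnum ?_)
    exact (Padic.norm_intCast_lt_one_iff).mp hlt
  have h3 : ‖((q.den : ℤ) : ℚ_[p])‖ < 1 :=
    (Padic.norm_intCast_lt_one_iff).mpr (by exact_mod_cast hd)
  have h4 : (q : ℚ_[p]) * ((q.den : ℤ) : ℚ_[p]) = ((q.num : ℤ) : ℚ_[p]) := by
    have := Rat.mul_den_eq_num q
    exact_mod_cast congrArg (fun x : ℚ => (x : ℚ_[p])) this
  have h5 := congrArg norm h4
  rw [norm_mul, h2] at h5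
  nlinarith [norm_nonneg (q : ℚ_[p]), norm_nonneg ((q.den : ℤ) : ℚ_[p])]

/-- The inclusion of `ℤ_(p)` into the `p`-adic integers. -/
def toPadicInt (p : ℕ) [Fact p.Prime] : ZLoc p →+* ℤ_[p] where
  toFun z := ⟨((z : ℚ) : ℚ_[p]), norm_le z⟩
  map_zero' := Subtype.ext (by simp)
  map_one' := Subtype.ext (by simp)
  map_add' a b := Subtype.ext (Rat.cast_add (a : ℚ) (b : ℚ))
  map_mul' a b := Subtype.ext (Rat.cast_mul (a : ℚ) (b : ℚ))

/-- Reduction `ℤ_(p) → ℤ/p^e`, factored through the `p`-adic integers. -/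
def red (p : ℕ) [Fact p.Prime] (e : ℕ) : ZLoc p →+* ZMod (p ^ e) :=
  (PadicInt.toZModPow e).comp (toPadicInt p)

lemma red_eq_zero_iff (e : ℕ) (z : ZLoc p) : red p e z = 0 ↔ (p : ZLoc p) ^ e ∣ z := by
  have hp0 : (p : ℚ) ≠ 0 := by exact_mod_cast hp.out.ne_zero
  have hp1 : (p : ℚ_[p]) ≠ 0 := by exact_mod_cast hp.out.ne_zero
  constructor
  · intro h
    have h1 : toPadicInt p z ∈ RingHom.ker (PadicInt.toZModPow (p := p) e) := h
    rw [PadicInt.ker_toZModPow, Ideal.mem_span_singleton] at h1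
    obtain ⟨c, hc⟩ := h1
    have h2 : ((z : ℚ) : ℚ_[p]) = (p : ℚ_[p]) ^ e * c := by
      change ((toPadicInt p z : ℤ_[p]) : ℚ_[p]) = _
      rw [hc]
      push_cast
      rfl
    have h3 : (((z : ℚ) / (p : ℚ) ^ e : ℚ) : ℚ_[p]) = c := by
      push_cast
      rw [h2]
      field_simp
    refine ⟨⟨(z : ℚ) / (p : ℚ) ^ e, mem_of_norm_le ?_⟩, ?_⟩
    · rw [h3]; exact c.2
    · ext
      push_cast
      field_simp
  · rintro ⟨c, rfl⟩
    rw [map_mul, map_pow, map_natCast]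
    have : ((p : ZMod (p ^ e)) ^ e) = 0 := by
      exact_mod_cast ZMod.natCast_self (p ^ e)
    rw [this, zero_mul]

lemma red_surjective (e : ℕ) : Function.Surjective (red p e) := by
  intro x
  obtain ⟨k, rfl⟩ := ZMod.intCast_surjective x
  exact ⟨(k : ZLoc p), map_intCast _ _⟩

lemma isUnit_iff (z : ZLoc p) : IsUnit z ↔ ¬ (p : ZLoc p) ∣ z := by
  have hp0 : (p : ℚ) ≠ 0 := by exact_mod_cast hp.out.ne_zero
  constructor
  · intro hz hd
    have h1 : IsUnit (p : ZLoc p) := isUnit_of_dvd_unit hd hz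
    have h2 : IsUnit (red p 1 (p : ZLoc p)) := h1.map _
    have h3 : red p 1 (p : ZLoc p) = 0 := (red_eq_zero_iff 1 _).mpr (by simp)
    rw [h3] at h2
    have : Fact (1 < p ^ 1) := ⟨by simpa using hp.out.one_lt⟩
    exact not_isUnit_zero h2
  · intro hd
    have hnum : ¬ ((p : ℤ) ∣ (z : ℚ).num) := by
      rintro ⟨k, hk⟩
      apply hd
      have hm : ((k : ℚ) * ((z : ℚ).den : ℚ)⁻¹) ∈ ZLoc p := by
        apply mem_of_norm_le
        have h1 : ‖(((z : ℚ).den : ℤ) : ℚ_[p])‖ = 1 := by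
          refine le_antisymm (Padic.norm_int_le_one _) (not_lt.mp fun hlt => z.2 ?_)
          exact_mod_cast (Padic.norm_intCast_lt_one_iff).mp hlt
        push_cast at h1 ⊢
        rw [norm_mul, norm_inv, h1]
        simpa using Padic.norm_int_le_one (p := p) k
      refine ⟨⟨_, hm⟩, ?_⟩
      ext
      push_cast
      rw [← mul_assoc]
      conv_lhs => rw [← Rat.num_div_den (z : ℚ), hk]
      push_cast
      rw [div_eq_mul_inv]
    have hz0 : (z : ℚ) ≠ 0 := by
      intro h
      rw [h] at hnum
      simp at hnum
    have hm : (z : ℚ)⁻¹ ∈ ZLoc p := by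
      intro h
      apply hnum
      rw [Rat.den_inv_of_ne_zero hz0] at h
      exact Int.natCast_dvd.mpr h
    refine IsUnit.of_mul_eq_one (⟨_, hm⟩ : ZLoc p) ?_
    ext
    push_cast
    exact mul_inv_cancel₀ hz0

lemma isUnit_add_mul {z : ZLoc p} (hz : IsUnit z) (c : ZLoc p) : IsUnit (z + p * c) := by
  rw [isUnit_iff] at hz ⊢
  intro h
  exact hz ((dvd_add_left (dvd_mul_right _ _)).mp h)

lemma intCast_dvd_iff (k : ℤ) : (p : ZLoc p) ∣ (k : ZLoc p) ↔ (p : ℤ) ∣ k := by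
  have := red_eq_zero_iff (p := p) 1 (k : ZLoc p)
  rw [map_intCast, ZMod.intCast_zmod_eq_zero_iff_dvd] at this
  simpa using this.symm

lemma isUnit_intCast_iff (k : ℤ) : IsUnit (k : ZLoc p) ↔ ¬ (p : ℤ) ∣ k := by
  rw [isUnit_iff, intCast_dvd_iff]

end ZLoc

/-! ### Presentations with a unit coefficient -/

section Quot

variable {p : ℕ} [hp : Fact p.Prime]

lemma mem_latt2 (a b : ZLoc p) : (![(a : ℚ), (b : ℚ)] : Fin 2 → ℚ) ∈ latt2 p := by
  unfold latt2
  rw [Submodule.mem_span_pair]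
  refine ⟨a, b, ?_⟩
  ext k
  fin_cases k <;> simp [Subring.smul_def]

lemma exists_of_mem_latt2 {v : Fin 2 → ℚ} (hv : v ∈ latt2 p) :
    ∃ a b : ZLoc p, v = ![(a : ℚ), (b : ℚ)] := by
  unfold latt2 at hv
  rw [Submodule.mem_span_pair] at hv
  obtain ⟨a, b, rfl⟩ := hv
  refine ⟨a, b, ?_⟩
  ext k
  fin_cases k <;> simp [Subring.smul_def]

/-- Coordinates on the lattice, as a linear map to `ℤ_(p)`. -/
def latt2Coord (p : ℕ) [Fact p.Prime] (k : Fin 2) : latt2 p →ₗ[ZLoc p] ZLoc p where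
  toFun v := ⟨v.1 k, by
    obtain ⟨a, b, h⟩ := exists_of_mem_latt2 v.2
    rw [h]
    fin_cases k
    · exact a.2
    · exact b.2⟩
  map_add' v v' := rfl
  map_smul' c v := rfl

/-- If one relation is `f x + w y` with `w` a unit, then `y` can be eliminated: the quotient is
`ℤ_(p)` modulo the ideal generated by the determinants `a w - b f`, for the relations `a x + b y`. It is
therefore `ℤ/p^e` as soon as `p ^ e` divides all of these and is associated to one of them. -/
lemma quot_equiv (S : Set (Fin 2 → ℚ)) (e : ℕ) (f w : ZLoc p) (hw : IsUnit w)
    (hD : ![(f : ℚ), (w : ℚ)] ∈ S)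
    (hall : ∀ g ∈ S, ∃ a b : ZLoc p, g = ![(a : ℚ), (b : ℚ)] ∧ (p : ZLoc p) ^ e ∣ a * w - b * f)
    (hex : ∃ a b c : ZLoc p, ![(a : ℚ), (b : ℚ)] ∈ S ∧ IsUnit c ∧
      a * w - b * f = (p : ZLoc p) ^ e * c) :
    Nonempty (QuotMod2 p S ≃+ ZMod (p ^ e)) := by
  obtain ⟨w, rfl⟩ := hw
  let L : latt2 p →ₗ[ZLoc p] ZLoc p :=
    (w : ZLoc p) • latt2Coord p 0 - f • latt2Coord p 1
  let φ : latt2 p →+ ZMod (p ^ e) := (ZLoc.red p e).toAddMonoidHom.comp L.toAddMonoidHom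
  have hL (a b : ZLoc p) (h) : L ⟨![(a : ℚ), (b : ℚ)], h⟩ = a * w - b * f := by
    ext
    simp [L, latt2Coord]
    ring
  have hsurj : Function.Surjective φ := by
    intro x
    obtain ⟨z, rfl⟩ := ZLoc.red_surjective (p := p) e x
    refine ⟨⟨_, mem_latt2 (z * ((w⁻¹ : (ZLoc p)ˣ) : ZLoc p)) 0⟩, ?_⟩
    change ZLoc.red p e (L _) = _
    rw [hL]
    simp
  have hker : (Submodule.comap (latt2 p).subtype (Submodule.span (ZLoc p) S)).toAddSubgroup
      = φ.ker := by
    ext v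
    rw [AddMonoidHom.mem_ker]
    change (v : Fin 2 → ℚ) ∈ Submodule.span (ZLoc p) S ↔ ZLoc.red p e (L v) = 0
    rw [ZLoc.red_eq_zero_iff]
    constructor
    · intro hv
      have key : Submodule.span (ZLoc p) S ≤ Submodule.map (latt2 p).subtype
          (Submodule.comap L (Ideal.span {(p : ZLoc p) ^ e})) := by
        rw [Submodule.span_le]
        intro g hg
        obtain ⟨a, b, rfl, hab⟩ := hall g hg
        refine ⟨⟨_, mem_latt2 a b⟩, ?_, rfl⟩
        rw [SetLike.mem_coe, Submodule.mem_comap, hL]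
        exact Ideal.mem_span_singleton.mpr hab
      obtain ⟨v', hv', hvv⟩ := key hv
      have : v' = v := Subtype.ext hvv
      subst this
      exact Ideal.mem_span_singleton.mp hv'
    · rintro ⟨d, hd⟩
      obtain ⟨v, hv⟩ := v
      obtain ⟨a, b, rfl⟩ := exists_of_mem_latt2 hv
      rw [hL] at hd
      obtain ⟨a', b', c, hg, ⟨c, rfl⟩, hc⟩ := hex
      -- `w v = (L v / L g) (w g - b' D) + b D`, where `g = (a', b')` and `D = (f, w)`
      have hc' : (p : ZLoc p) ^ e = (a' * w - b' * f) * ((c⁻¹ : (ZLoc p)ˣ) : ZLoc p) := by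
        rw [hc]; simp
      set ci : ZLoc p := ((c⁻¹ : (ZLoc p)ˣ) : ZLoc p)
      have hwi : (w : ZLoc p) * ((w⁻¹ : (ZLoc p)ˣ) : ZLoc p) = 1 := by simp
      set wi : ZLoc p := ((w⁻¹ : (ZLoc p)ˣ) : ZLoc p)
      have e1 : a = (d * ci) * a' + (wi * (b - d * ci * b')) * f := by
        linear_combination wi * hd + wi * d * hc' + (d * ci * a' - a) * hwi
      have e2 : b = (d * ci) * b' + (wi * (b - d * ci * b')) * w := by
        linear_combination (-(b - d * ci * b')) * hwi
      have : (![(a : ℚ), (b : ℚ)] : Fin 2 → ℚ)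
          = (d * ci) • ![(a' : ℚ), (b' : ℚ)] +
            (wi * (b - d * ci * b')) • ![(f : ℚ), ((w : ZLoc p) : ℚ)] := by
        ext k
        fin_cases k
        · simpa [Subring.smul_def] using congrArg (fun z : ZLoc p => (z : ℚ)) e1
        · simpa [Subring.smul_def] using congrArg (fun z : ZLoc p => (z : ℚ)) e2
      change (![(a : ℚ), (b : ℚ)] : Fin 2 → ℚ) ∈ _
      rw [this]
      exact Submodule.add_mem _ (Submodule.smul_mem _ _ (Submodule.subset_span hg))
        (Submodule.smul_mem _ _ (Submodule.subset_span hD))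
  exact ⟨(QuotientAddGroup.quotientAddEquivOfEq hker).trans
    (QuotientAddGroup.quotientKerEquivOfSurjective φ hsurj)⟩

end Quot

/-! ### Powers of `1 + p κ` -/

section Powers

variable {A : Type*} [CommRing A]

lemma one_add_pow_expand (y : A) (j : ℕ) :
    ∃ d, (1 + y) ^ j = 1 + j * y + (j.choose 2 : ℕ) * y ^ 2 + y ^ 3 * d := by
  induction j with
  | zero => exact ⟨0, by simp⟩
  | succ j ih =>
    obtain ⟨d, hd⟩ := ih
    have h : (j + 1).choose 2 = j + j.choose 2 := by
      rw [Nat.choose_succ_succ' j 1, Nat.choose_one_right]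
    refine ⟨(j.choose 2 : ℕ) + d * (1 + y), ?_⟩
    rw [pow_succ, hd, h]
    push_cast
    ring

lemma units_zpow_expand (X : Aˣ) (y : A) (hX : (X : A) = 1 + y) (j : ℤ) :
    ∃ d, ((X ^ j : Aˣ) : A) = 1 + j * y + y ^ 2 * d := by
  have hXi : ((X⁻¹ : Aˣ) : A) * (1 + y) = 1 := by rw [← hX]; simp
  induction j using Int.induction_on with
  | zero => exact ⟨0, by simp⟩
  | succ j ih =>
    obtain ⟨d, hd⟩ := ih
    refine ⟨j + d * (1 + y), ?_⟩
    rw [zpow_add_one, Units.val_mul, hd, hX]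
    push_cast
    ring
  | pred j ih =>
    obtain ⟨d, hd⟩ := ih
    set Xi : A := ((X⁻¹ : Aˣ) : A)
    refine ⟨Xi * (d + j + 1), ?_⟩
    rw [zpow_sub_one, Units.val_mul, hd]
    change _ * Xi = _
    push_cast
    linear_combination (1 + (-j - 1) * y) * hXi

lemma pow_prime_pow_expand {p : ℕ} (hodd : Odd p) (X κ : A) (hX : X = 1 + p * κ) (k : ℕ) :
    ∃ c, X ^ (p ^ k) = 1 + (p : A) ^ (k + 1) * (κ + p * c) := by
  induction k with
  | zero => exact ⟨0, by simp [hX]⟩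
  | succ k ih =>
    obtain ⟨c, hc⟩ := ih
    obtain ⟨d, hd⟩ := one_add_pow_expand ((p : A) ^ (k + 1) * (κ + p * c)) p
    obtain ⟨h, hh⟩ := hodd
    -- oddness of `p` makes `p.choose 2` divisible by `p`
    have hch : p.choose 2 = p * h := by
      rw [Nat.choose_two_right, hh, show 2 * h + 1 - 1 = 2 * h by omega,
        show (2 * h + 1) * (2 * h) = 2 * ((2 * h + 1) * h) by ring]
      simp
    refine ⟨c + h * (p : A) ^ k * (κ + p * c) ^ 2 + (p : A) ^ (2 * k) * (κ + p * c) ^ 3 * d, ?_⟩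
    rw [pow_succ p k, pow_mul, hc, hd, hch]
    push_cast
    ring

/-- For odd `p`, `(1 + p κ) ^ (p ^ k j) - 1` has leading term `p ^ (k + 1) κ j`. -/
lemma units_zpow_sub_one {p : ℕ} (hodd : Odd p) (X : Aˣ) (κ : A) (hX : (X : A) = 1 + p * κ)
    (k : ℕ) (j : ℤ) :
    ∃ c, ((X ^ ((p : ℤ) ^ k * j) : Aˣ) : A) = 1 + (p : A) ^ (k + 1) * (κ * j + p * c) := by
  obtain ⟨c, hc⟩ := pow_prime_pow_expand hodd (X : A) κ hX k
  obtain ⟨d, hd⟩ := units_zpow_expand (X ^ (p ^ k)) _ (by rw [Units.val_pow_eq_pow_val]; exact hc) j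
  refine ⟨c * j + (p : A) ^ k * (κ + p * c) ^ 2 * d, ?_⟩
  have h : X ^ ((p : ℤ) ^ k * j) = (X ^ (p ^ k)) ^ j := by
    rw [zpow_mul]; congr 1
  rw [h, hd]
  ring

end Powers

lemma enat_eq_min {e a b : ℕ} (h : (e : ℕ∞) = min (a : ℕ∞) (b : ℕ∞)) : e = min a b := by
  rcases le_total a b with hab | hab
  · rw [min_eq_left hab]
    rw [min_eq_left (by exact_mod_cast hab)] at h
    exact_mod_cast h
  · rw [min_eq_right hab]
    rw [min_eq_right (by exact_mod_cast hab)] at h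
    exact_mod_cast h

lemma nuE_cases (p : ℕ) [hp : Fact p.Prime] (x : ℤ) :
    (x = 0 ∧ nuE p x = ⊤) ∨
      ∃ (a : ℕ) (x' : ℤ), x = (p : ℤ) ^ a * x' ∧ ¬ (p : ℤ) ∣ x' ∧ nuE p x = (a : ℕ∞) := by
  by_cases hx : x = 0
  · left; simp [hx, nuE]
  · right
    obtain ⟨x', hx'⟩ := padicValInt_dvd (p := p) x
    refine ⟨padicValInt p x, x', hx', ?_, by simp [nuE, hx]⟩
    rintro ⟨y, rfl⟩
    have : (p : ℤ) ^ (padicValInt p x + 1) ∣ x := ⟨y, by rw [pow_succ, mul_assoc]; exact hx'⟩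
    rw [padicValInt_dvd_iff] at this
    omega

/-! ### The determinants -/

section Determinants

variable {p : ℕ} [hp : Fact p.Prime]

/-- The prescribed exponent `e` is the least valuation of `a`, `b` and `c`. For `X = r ^ (p - 1)` and
`T = t (p - 1)` these are, up to units, the determinants of the first three relations with the
fourth. -/
lemma det_min (hodd : Odd p) (X : (ZLoc p)ˣ) (κ : ZLoc p) (hκ : IsUnit κ)
    (hX : (X : ZLoc p) = 1 + p * κ) (n t T : ℕ) (hn : 1 ≤ n) (hT : 1 ≤ T) (htp : ¬ p ∣ t)
    (i : ℤ) (e : ℕ)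
    (h1 : ¬ ((p : ℤ) ∣ i - t) → (e : ℕ∞) = min (nuE p i + 2) (n : ℕ∞))
    (h2 : ((p : ℤ) ∣ i - t) → 1 < n →
        (e : ℕ∞) = min (nuE p (i - t) + 2) ((T + n : ℕ) : ℕ∞))
    (h3 : ((p : ℤ) ∣ i - t) → n = 1 →
        (e : ℕ∞) = min (nuE p (i - t - t * (p : ℤ) ^ T) + 1) ((T + 2 : ℕ) : ℕ∞))
    (P xi xt a b c : ZLoc p) (hP : P = p) (hxi : xi = (X ^ i : (ZLoc p)ˣ))
    (hxt : xt = (X ^ (t : ℤ) : (ZLoc p)ˣ))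
    (ha : a = P ^ (n + T) * (xi - 1)) (hb : b = P ^ (n - 1) * (xt - xi + P ^ T * (xi - 1)))
    (hc : c = (xt - xi) * (xi - 1)) :
    (P ^ e ∣ a ∧ P ^ e ∣ b ∧ P ^ e ∣ c) ∧
      ∃ v, IsUnit v ∧ (a = P ^ e * v ∨ b = P ^ e * v ∨ c = P ^ e * v) := by
  have hxtu : IsUnit xt := hxt ▸ Units.isUnit _
  have hpz : Prime (p : ℤ) := Nat.prime_iff_prime_int.mp hp.out
  have dvd_of {x y : ZLoc p} {k l : ℕ} (h : l ≤ k) (hx : x = P ^ k * y) : P ^ l ∣ x :=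
    hx ▸ (pow_dvd_pow P h).mul_right y
  have uniti {j : ℤ} (hj : ¬ (p : ℤ) ∣ j) (d : ZLoc p) : IsUnit (κ * j + P * d) := by
    rw [hP]
    exact ZLoc.isUnit_add_mul (hκ.mul ((ZLoc.isUnit_intCast_iff j).mpr hj)) d
  have expi (k : ℕ) (j : ℤ) (h : i = (p : ℤ) ^ k * j) :
      ∃ d, xi - 1 = P ^ (k + 1) * (κ * j + P * d) := by
    obtain ⟨d, hd⟩ := units_zpow_sub_one hodd X κ hX k j
    exact ⟨d, by rw [hxi, h, hd, hP]; ring⟩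
  have expt (k : ℕ) (j : ℤ) (h : i - t = (p : ℤ) ^ k * j) :
      ∃ d, xt - xi = -xt * (P ^ (k + 1) * (κ * j + P * d)) := by
    obtain ⟨d, hd⟩ := units_zpow_sub_one hodd X κ hX k j
    refine ⟨d, ?_⟩
    have : xi = xt * (X ^ ((p : ℤ) ^ k * j) : (ZLoc p)ˣ) := by
      rw [hxi, hxt, ← Units.val_mul, ← zpow_add, ← h]
      congr 2
      ring
    rw [this, hd, hP]; ring
  by_cases hit : (p : ℤ) ∣ i - t
  · have hpi : ¬ (p : ℤ) ∣ i := by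
      intro h
      have : (p : ℤ) ∣ (t : ℤ) := by
        have := dvd_sub h hit
        simpa using this
      exact htp (by exact_mod_cast this)
    obtain ⟨d0, hd0⟩ := expi 0 i (by simp)
    have hui := uniti hpi d0
    rcases eq_or_lt_of_le hn with hn1 | hn1
    · have hn1 := hn1.symm
      have he := h3 hit hn1
      subst hn1
      obtain ⟨l, hl⟩ := hit
      obtain ⟨dt, hdt⟩ : ∃ dt, xt = 1 + P * dt := by
        obtain ⟨d, hd⟩ := units_zpow_sub_one hodd X κ hX 0 t
        exact ⟨κ * t + p * d, by rw [hxt, hP]; simpa using hd⟩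
      -- `b` is congruent to `-κ p (i - t - t p ^ T)` mod `p ^ (k + 2)` if `p ^ k` divides the bracket
      have main (k : ℕ) (hk : k ≤ T) (s : ℤ) (hs : i - t - t * (p : ℤ) ^ T = (p : ℤ) ^ k * s) :
          (∃ d, b = P ^ (k + 1) * (κ * (-s : ℤ) + P * d)) ∧ P ^ (k + 2) ∣ c := by
        obtain ⟨D, rfl⟩ := Nat.exists_eq_add_of_le hk
        have hj : i - t = (p : ℤ) ^ k * (s + t * (p : ℤ) ^ D) := by
          linear_combination hs
        obtain ⟨d, hd⟩ := expt k _ hj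
        constructor
        · refine ⟨-(κ * (s + t * P ^ D) * dt) - xt * d + P ^ D * d0 + P ^ D * κ * l, ?_⟩
          have hi : (i : ZLoc p) = t + P * l := by
            have : i = t + p * l := by linear_combination hl
            rw [this, hP]; push_cast; ring
          rw [hb, hd, hd0, hi]
          push_cast
          rw [← hP]
          linear_combination (-(P ^ (k + 1)) * κ * (s + t * P ^ D)) * hdt
        · refine dvd_of le_rfl (y := -xt * (κ * (s + t * (p : ℤ) ^ D : ℤ) + P * d) *
            (κ * i + P * d0)) ?_
          rw [hc, hd, hd0]; ring
      have haT : a = P ^ (T + 2) * (κ * i + P * d0) := by rw [ha, hd0]; ring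
      have big (hT1 : (p : ℤ) ^ (T + 1) ∣ i - t - t * (p : ℤ) ^ T) : P ^ (T + 2) ∣ b ∧
          P ^ (T + 2) ∣ c := by
        obtain ⟨s, hs⟩ := hT1
        obtain ⟨⟨d, hd⟩, hcc⟩ := main T le_rfl (p * s) (by rw [hs]; ring)
        refine ⟨⟨κ * (-s) + d, ?_⟩, hcc⟩
        rw [hd, hP]; push_cast; ring
      rcases nuE_cases p (i - t - t * (p : ℤ) ^ T) with ⟨h0, hν⟩ | ⟨k, s, hs, hps, hν⟩
      · rw [hν] at he
        have he : e = T + 2 := by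
          rw [top_add, min_eq_right le_top] at he
          exact_mod_cast he
        subst he
        exact ⟨⟨⟨_, haT⟩, big (h0 ▸ dvd_zero _)⟩, _, hui, .inl haT⟩
      · rw [hν] at he
        have he : e = min (k + 1) (T + 2) := enat_eq_min (by exact_mod_cast he)
        by_cases hk : k ≤ T
        · have he : e = k + 1 := by omega
          subst he
          obtain ⟨⟨d, hd⟩, hcc⟩ := main k hk s hs
          refine ⟨⟨dvd_of (by omega) haT, ⟨_, hd⟩, (pow_dvd_pow P (by omega)).trans hcc⟩,
            _, uniti (by simpa using hps) d, .inr (.inl hd)⟩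
        · have he : e = T + 2 := by omega
          subst he
          exact ⟨⟨⟨_, haT⟩, big (hs ▸ (pow_dvd_pow _ (by omega)).mul_right s)⟩, _, hui, .inl haT⟩
    · have he := h2 hit hn1
      obtain ⟨N, rfl⟩ := Nat.exists_eq_add_of_le' hn
      simp only [Nat.add_sub_cancel] at hb
      have haT : a = P ^ (N + 1 + T + 1) * (κ * i + P * d0) := by rw [ha, hd0]; ring
      rcases nuE_cases p (i - t) with ⟨h0, hν⟩ | ⟨k, s, hs, hps, hν⟩
      · rw [hν] at he
        have he : e = T + (N + 1) := by
          rw [top_add, min_eq_right le_top] at he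
          exact_mod_cast he
        subst he
        have hxx : xt - xi = 0 := by
          rw [hxi, hxt, show i = t by omega]; ring
        have hbT : b = P ^ (T + (N + 1)) * (κ * i + P * d0) := by
          rw [hb, hxx, hd0]; ring
        exact ⟨⟨dvd_of (by omega) haT, ⟨_, hbT⟩, by rw [hc, hxx]; simp⟩, _, hui,
          .inr (.inl hbT)⟩
      · rw [hν] at he
        have he : e = min (k + 2) (T + (N + 1)) := enat_eq_min (by exact_mod_cast he)
        obtain ⟨d, hd⟩ := expt k s hs
        have hus := uniti hps d
        have hcT : c = P ^ (k + 2) * (-xt * (κ * s + P * d) * (κ * i + P * d0)) := by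
          rw [hc, hd, hd0]; ring
        by_cases hk : k ≤ T
        · have he : e = k + 2 := by omega
          subst he
          obtain ⟨D, rfl⟩ := Nat.exists_eq_add_of_le hk
          refine ⟨⟨dvd_of (by omega) haT, dvd_of (k := N + k + 1) (by omega)
            (y := -xt * (κ * s + P * d) + P ^ D * (κ * i + P * d0)) ?_, ⟨_, hcT⟩⟩, _,
            (hxtu.neg.mul hus).mul hui, .inr (.inr hcT)⟩
          rw [hb, hd, hd0]; ring
        · obtain ⟨D, rfl⟩ := Nat.exists_eq_add_of_lt (not_le.mp hk)
          have hbT : b = P ^ (T + (N + 1)) * ((κ * i + P * d0) +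
              p * (-xt * (κ * s + P * d) * P ^ D)) := by
            rw [hb, hd, hd0, ← hP]; ring
          have hbu := ZLoc.isUnit_add_mul hui (-xt * (κ * s + P * d) * P ^ D)
          refine ⟨⟨dvd_of (by omega) haT, dvd_of (by omega) hbT, dvd_of (by omega) hcT⟩, ?_⟩
          rcases le_total (T + D + 1 + 2) (T + (N + 1)) with hle | hle
          · rw [min_eq_left hle] at he
            subst he
            exact ⟨_, (hxtu.neg.mul hus).mul hui, .inr (.inr hcT)⟩
          · rw [min_eq_right hle] at he
            subst he
            exact ⟨_, hbu, .inr (.inl hbT)⟩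
  · have he := h1 hit
    obtain ⟨N, rfl⟩ := Nat.exists_eq_add_of_le' hn
    obtain ⟨S, rfl⟩ := Nat.exists_eq_add_of_le' hT
    simp only [Nat.add_sub_cancel] at hb
    obtain ⟨d, hd⟩ := expt 0 (i - t) (by simp)
    have hus := hxtu.neg.mul (uniti hit d)
    obtain ⟨d0, hd0⟩ := expi 0 i (by simp)
    have hbT : b = P ^ (N + 1) * (-xt * (κ * (i - t : ℤ) + P * d) +
        p * (P ^ S * (κ * i + P * d0))) := by
      rw [hb, hd, hd0, ← hP]; ring
    have hbu := ZLoc.isUnit_add_mul hus (P ^ S * (κ * i + P * d0))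
    have haT : a = P ^ (N + 1 + (S + 1)) * (xi - 1) := ha
    rcases nuE_cases p i with ⟨h0, hν⟩ | ⟨k, s, hs, hps, hν⟩
    · rw [hν] at he
      have he : e = N + 1 := by
        rw [top_add, min_eq_right le_top] at he
        exact_mod_cast he
      subst he
      have : xi - 1 = 0 := by rw [hxi, h0]; simp
      exact ⟨⟨dvd_of (by omega) haT, ⟨_, hbT⟩, by rw [hc, this]; simp⟩, _, hbu, .inr (.inl hbT)⟩
    · rw [hν] at he
      have he : e = min (k + 2) (N + 1) := enat_eq_min (by exact_mod_cast he)
      obtain ⟨d1, hd1⟩ := expi k s hs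
      have hu1 := uniti hps d1
      have hcT : c = P ^ (k + 2) * (-xt * (κ * (i - t : ℤ) + P * d) * (κ * s + P * d1)) := by
        rw [hc, hd, hd1]; ring
      refine ⟨⟨dvd_of (by omega) haT, dvd_of (by omega) hbT, dvd_of (by omega) hcT⟩, ?_⟩
      rcases le_total (k + 2) (N + 1) with hle | hle
      · rw [min_eq_left hle] at he
        subst he
        exact ⟨_, hus.mul hu1, .inr (.inr hcT)⟩
      · rw [min_eq_right hle] at he
        subst he
        exact ⟨_, hbu, .inr (.inl hbT)⟩

end Determinants

/-! ### Generators of `(ℤ/p²)ˣ` -/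

section Generator

variable {p : ℕ} [hp : Fact p.Prime]

lemma gen_order (r : ℤ)
    (hr : ∀ v : (ZMod (p ^ 2))ˣ, ∃ j : ℕ, (v : ZMod (p ^ 2)) = (r : ZMod (p ^ 2)) ^ j)
    (ρ : (ZMod p)ˣ) (hρ : (ρ : ZMod p) = r) : orderOf ρ = p - 1 := by
  have : NeZero (p ^ 2) := ⟨pow_ne_zero 2 hp.out.ne_zero⟩
  have hd : p ∣ p ^ 2 := dvd_pow_self p two_ne_zero
  rw [orderOf_eq_card_of_forall_mem_powers (g := ρ), Nat.card_eq_fintype_card, ZMod.card_units]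
  intro x
  obtain ⟨v, rfl⟩ := ZMod.unitsMap_surjective hd x
  obtain ⟨j, hj⟩ := hr v
  refine ⟨j, ?_⟩
  ext
  have := congrArg (ZMod.castHom hd (ZMod p)) hj
  simp only [map_pow, map_intCast] at this
  push_cast
  rw [hρ, ← this]
  rfl

lemma gen_not_dvd (hodd : Odd p) (r : ℤ)
    (hr : ∀ v : (ZMod (p ^ 2))ˣ, ∃ j : ℕ, (v : ZMod (p ^ 2)) = (r : ZMod (p ^ 2)) ^ j) :
    ¬ (p : ℤ) ∣ r := by
  intro h
  obtain ⟨j, hj⟩ := hr (-1)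
  have hd : p ∣ p ^ 2 := dvd_pow_self p two_ne_zero
  have h1 := congrArg (ZMod.castHom hd (ZMod p)) hj
  have h0 : (r : ZMod p) = 0 := (ZMod.intCast_zmod_eq_zero_iff_dvd r p).mpr h
  have hp3 : 2 < p := by
    have := hp.out.two_le
    obtain ⟨k, hk⟩ := hodd
    omega
  have : Fact (2 < p) := ⟨hp3⟩
  simp only [map_pow, map_intCast, h0, Units.val_neg, Units.val_one, map_neg, map_one] at h1
  rcases Nat.eq_zero_or_pos j with rfl | hjp
  · rw [pow_zero] at h1
    exact ZMod.neg_one_ne_one h1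
  · rw [zero_pow hjp.ne', neg_eq_zero] at h1
    exact one_ne_zero h1

/-- If `r ^ (p - 1)` were `1` mod `p²`, then so would be `(1 + p) ^ (p - 1) = 1 - p`. -/
lemma gen_fermat_quotient (r : ℤ)
    (hr : ∀ v : (ZMod (p ^ 2))ˣ, ∃ j : ℕ, (v : ZMod (p ^ 2)) = (r : ZMod (p ^ 2)) ^ j)
    (hpr : ¬ (p : ℤ) ∣ r) :
    ∃ κ : ℤ, r ^ (p - 1) = 1 + p * κ ∧ ¬ (p : ℤ) ∣ κ := by
  have hr1 : (p : ℤ) ∣ r ^ (p - 1) - 1 := by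
    rw [← ZMod.intCast_zmod_eq_zero_iff_dvd]
    push_cast
    rw [ZMod.pow_card_sub_one_eq_one, sub_self]
    rwa [Ne, ZMod.intCast_zmod_eq_zero_iff_dvd]
  obtain ⟨κ, hκ⟩ := hr1
  refine ⟨κ, by linear_combination hκ, ?_⟩
  rintro ⟨l, rfl⟩
  have hp2 : (p : ZMod (p ^ 2)) ^ 2 = 0 := by exact_mod_cast ZMod.natCast_self (p ^ 2)
  let v : (ZMod (p ^ 2))ˣ := ⟨1 + p, 1 - p, by linear_combination -hp2, by linear_combination -hp2⟩
  obtain ⟨j, hj⟩ := hr v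
  have hrp : (r : ZMod (p ^ 2)) ^ (p - 1) = 1 := by
    have := congrArg (Int.cast : ℤ → ZMod (p ^ 2)) hκ
    push_cast at this
    linear_combination this + l * hp2
  have h1 : (1 + (p : ZMod (p ^ 2))) ^ (p - 1) = 1 := by
    change (v : ZMod (p ^ 2)) ^ (p - 1) = 1
    rw [hj, ← pow_mul, mul_comm, pow_mul, hrp, one_pow]
  obtain ⟨d, hd⟩ := one_add_pow_expand (p : ZMod (p ^ 2)) (p - 1)
  have h2 : ((p * (p - 1) : ℕ) : ZMod (p ^ 2)) = 0 := by
    push_cast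
    linear_combination hd.symm.trans h1 - (((p - 1).choose 2 : ℕ) + p * d) * hp2
  rw [ZMod.natCast_eq_zero_iff, pow_two] at h2
  have h3 := Nat.le_of_dvd (Nat.sub_pos_of_lt hp.out.one_lt) (Nat.dvd_of_mul_dvd_mul_left hp.out.pos h2)
  have := hp.out.one_lt
  omega

end Generator

/-- Davis' Proposition on `v₁`-periodic homotopy of sphere bundles with `α_t`
attaching map: even-degree groups. -/
theorem stmt3 (p : ℕ) [Fact p.Prime] (hodd : Odd p) (r : ℤ)
    (hr : ∀ v : (ZMod (p ^ 2))ˣ, ∃ j : ℕ, (v : ZMod (p ^ 2)) = (r : ZMod (p ^ 2)) ^ j)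
    (u : ZLoc p) (hu : IsUnit u)
    (n t : ℕ) (hn : 1 ≤ n) (ht : 1 ≤ t) (htp : ¬ p ∣ t) (m : ℤ) :
    (¬ ((p : ℤ) - 1 ∣ m - n) →
      Subsingleton (QuotMod2 p
        {![0, (p : ℚ) ^ (n + t * (p - 1))],
         ![(p : ℚ) ^ n, (u : ℚ) * (p : ℚ) ^ (n - 1) * ((p : ℚ) ^ (t * (p - 1)) - 1)],
         ![0, (r : ℚ) ^ (n + t * (p - 1)) - (r : ℚ) ^ m],
         ![(r : ℚ) ^ n - (r : ℚ) ^ m,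
           ((u : ℚ) / p) * (r : ℚ) ^ n * ((r : ℚ) ^ (t * (p - 1)) - 1)]})) ∧
    (∀ i : ℤ, m = n + ((p : ℤ) - 1) * i → ∀ e : ℕ,
      (¬ ((p : ℤ) ∣ i - t) → (e : ℕ∞) = min (nuE p i + 2) (n : ℕ∞)) →
      (((p : ℤ) ∣ i - t) → 1 < n →
        (e : ℕ∞) = min (nuE p (i - t) + 2) ((t * (p - 1) + n : ℕ) : ℕ∞)) →
      (((p : ℤ) ∣ i - t) → n = 1 →
        (e : ℕ∞) = min (nuE p (i - t - t * (p : ℤ) ^ (t * (p - 1))) + 1)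
          ((t * (p - 1) + 2 : ℕ) : ℕ∞)) →
      Nonempty ((QuotMod2 p
        {![0, (p : ℚ) ^ (n + t * (p - 1))],
         ![(p : ℚ) ^ n, (u : ℚ) * (p : ℚ) ^ (n - 1) * ((p : ℚ) ^ (t * (p - 1)) - 1)],
         ![0, (r : ℚ) ^ (n + t * (p - 1)) - (r : ℚ) ^ m],
         ![(r : ℚ) ^ n - (r : ℚ) ^ m,
           ((u : ℚ) / p) * (r : ℚ) ^ n * ((r : ℚ) ^ (t * (p - 1)) - 1)]}) ≃+
        ZMod (p ^ e))) := by
  have hp1 : 1 < p := (Fact.out : p.Prime).one_lt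
  have hpQ : (p : ℚ) ≠ 0 := by exact_mod_cast (Fact.out : p.Prime).ne_zero
  have hpr := gen_not_dvd hodd r hr
  have hrQ : (r : ℚ) ≠ 0 := by
    intro h
    exact hpr (by simp [Int.cast_eq_zero.mp h])
  obtain ⟨κ, hκ, hpκ⟩ := gen_fermat_quotient r hr hpr
  obtain ⟨R, hR⟩ := (ZLoc.isUnit_intCast_iff (p := p) r).mpr hpr
  have hRQ : ((R : ZLoc p) : ℚ) = r := by rw [hR]; rfl
  have hRz (k : ℤ) : (((R ^ k : (ZLoc p)ˣ) : ZLoc p) : ℚ) = (r : ℚ) ^ k := by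
    change ((Units.map (ZLoc p).subtype.toMonoidHom (R ^ k) : ℚˣ) : ℚ) = _
    rw [map_zpow, Units.val_zpow_eq_zpow_val]
    change ((R : ZLoc p) : ℚ) ^ k = _
    rw [hRQ]
  set T : ℕ := t * (p - 1) with hTdef
  have hT : 1 ≤ T := Nat.mul_pos ht (Nat.sub_pos_of_lt hp1)
  set X : (ZLoc p)ˣ := R ^ (p - 1) with hXdef
  have hX : (X : ZLoc p) = 1 + p * (κ : ZLoc p) := by
    rw [hXdef, Units.val_pow_eq_pow_val, hR]
    exact_mod_cast congrArg (Int.cast : ℤ → ZLoc p) hκ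
  have hκu : IsUnit (κ : ZLoc p) := (ZLoc.isUnit_intCast_iff κ).mpr hpκ
  have hXt : X ^ (t : ℤ) = R ^ T := by
    rw [zpow_natCast, hXdef, ← pow_mul, mul_comm]
  -- the unit `w = (u / p) r ^ n (r ^ T - 1)`
  obtain ⟨c₀, hc₀⟩ := units_zpow_sub_one hodd X (κ : ZLoc p) hX 0 (t : ℤ)
  have hg : IsUnit ((κ : ZLoc p) * (t : ℤ) + p * c₀) :=
    ZLoc.isUnit_add_mul (hκu.mul ((ZLoc.isUnit_intCast_iff _).mpr (by exact_mod_cast htp))) c₀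
  set g : ZLoc p := (κ : ZLoc p) * (t : ℤ) + p * c₀
  have hgT : ((R : ZLoc p)) ^ T = 1 + p * g := by
    rw [← Units.val_pow_eq_pow_val, ← hXt]
    simpa using hc₀
  have hwu : IsUnit (u * (R : ZLoc p) ^ n * g) := (hu.mul (R.isUnit.pow n)).mul hg
  have hwQ : ((u * (R : ZLoc p) ^ n * g : ZLoc p) : ℚ)
      = ((u : ℚ) / p) * (r : ℚ) ^ n * ((r : ℚ) ^ T - 1) := by
    have := congrArg (fun z : ZLoc p => (z : ℚ)) hgT
    push_cast at this ⊢
    rw [hRQ] at this ⊢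
    rw [this]
    field_simp
    ring
  have hfQ : (((R : ZLoc p) ^ n - (R ^ m : (ZLoc p)ˣ) : ZLoc p) : ℚ)
      = (r : ℚ) ^ n - (r : ℚ) ^ m := by
    push_cast
    rw [hRz, hRQ]
  have hBQ : ((u * (p : ZLoc p) ^ (n - 1) * ((p : ZLoc p) ^ T - 1) : ZLoc p) : ℚ)
      = (u : ℚ) * (p : ℚ) ^ (n - 1) * ((p : ℚ) ^ T - 1) := by
    push_cast
    rfl
  have hCQ : (((R : ZLoc p) ^ (n + T) - (R ^ m : (ZLoc p)ˣ) : ZLoc p) : ℚ)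
      = (r : ℚ) ^ (n + T) - (r : ℚ) ^ m := by
    push_cast
    rw [hRz, hRQ]
  rw [← hwQ, ← hfQ, ← hBQ, ← hCQ,
    show (p : ℚ) ^ (n + T) = (((p : ZLoc p) ^ (n + T) : ZLoc p) : ℚ) by push_cast; rfl,
    show (p : ℚ) ^ n = (((p : ZLoc p) ^ n : ZLoc p) : ℚ) by push_cast; rfl,
    show (0 : ℚ) = ((0 : ZLoc p) : ℚ) by rfl]
  set w : ZLoc p := u * (R : ZLoc p) ^ n * g with hw
  set f : ZLoc p := (R : ZLoc p) ^ n - (R ^ m : (ZLoc p)ˣ) with hf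
  set β : ZLoc p := u * (p : ZLoc p) ^ (n - 1) * ((p : ZLoc p) ^ T - 1) with hβ
  set γ : ZLoc p := (R : ZLoc p) ^ (n + T) - (R ^ m : (ZLoc p)ˣ) with hγ
  -- elimination of `y`, in terms of the determinants of the first three relations with the fourth
  have reduce (e : ℕ) (hA : (p : ZLoc p) ^ e ∣ (p : ZLoc p) ^ (n + T) * f)
      (hB : (p : ZLoc p) ^ e ∣ (p : ZLoc p) ^ n * w - β * f) (hC : (p : ZLoc p) ^ e ∣ γ * f)
      (hex : ∃ v, IsUnit v ∧ ((p : ZLoc p) ^ (n + T) * f = (p : ZLoc p) ^ e * v ∨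
        (p : ZLoc p) ^ n * w - β * f = (p : ZLoc p) ^ e * v ∨ γ * f = (p : ZLoc p) ^ e * v)) :
      Nonempty (QuotMod2 p
        {![((0 : ZLoc p) : ℚ), (((p : ZLoc p) ^ (n + T) : ZLoc p) : ℚ)],
          ![(((p : ZLoc p) ^ n : ZLoc p) : ℚ), (β : ℚ)],
          ![((0 : ZLoc p) : ℚ), (γ : ℚ)], ![(f : ℚ), (w : ℚ)]} ≃+ ZMod (p ^ e)) := by
    refine quot_equiv _ e f w hwu (by simp) ?_ ?_
    · rintro _ (rfl | rfl | rfl | rfl)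
      · exact ⟨_, _, rfl, by simpa using hA⟩
      · exact ⟨_, _, rfl, hB⟩
      · exact ⟨_, _, rfl, by simpa using hC⟩
      · exact ⟨_, _, rfl, by rw [mul_comm, sub_self]; exact dvd_zero _⟩
    · obtain ⟨v, hv, h | h | h⟩ := hex
      · exact ⟨0, _, -v, .inl rfl, hv.neg, by linear_combination -h⟩
      · exact ⟨_, _, v, .inr (.inl rfl), hv, h⟩
      · exact ⟨0, _, -v, .inr (.inr (.inl rfl)), hv.neg, by linear_combination -h⟩
  constructor
  · intro hmn
    -- `r ^ n - r ^ m` and `r ^ (n + T) - r ^ m` are units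
    have unit_sub (k : ℕ) (hk : ¬ ((p : ℤ) - 1 ∣ m - k)) :
        IsUnit ((R : ZLoc p) ^ k - (R ^ m : (ZLoc p)ˣ)) := by
      rw [ZLoc.isUnit_iff]
      intro hd
      have h0 := (ZLoc.red_eq_zero_iff (p := p) 1 _).mpr (by simpa using hd)
      apply hk
      let ψ : ZLoc p →+* ZMod p := (ZMod.castHom (by simp : p ∣ p ^ 1) (ZMod p)).comp (ZLoc.red p 1)
      have h1 : ψ ((R : ZLoc p) ^ k - (R ^ m : (ZLoc p)ˣ)) = 0 := by
        simp only [ψ, RingHom.comp_apply]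
        rw [h0, map_zero]
      let ρ : (ZMod p)ˣ := Units.map ψ.toMonoidHom R
      have hρ : (ρ : ZMod p) = r := by
        change ψ (R : ZLoc p) = r
        rw [hR, map_intCast]
      have h2 : ρ ^ k = ρ ^ m := by
        have e1 : Units.map ψ.toMonoidHom (R ^ m) = ρ ^ m := map_zpow _ R m
        have e2 : Units.map ψ.toMonoidHom (R ^ k) = ρ ^ k := map_pow _ R k
        rw [← e1, ← e2]
        ext
        change ψ ((R ^ k : (ZLoc p)ˣ) : ZLoc p) = ψ ((R ^ m : (ZLoc p)ˣ) : ZLoc p)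
        rw [map_sub, sub_eq_zero] at h1
        rw [← h1, Units.val_pow_eq_pow_val]
      have h3 : ρ ^ (m - k) = 1 := by
        rw [zpow_sub, ← h2, zpow_natCast, mul_inv_cancel]
      have h4 := orderOf_dvd_iff_zpow_eq_one.mpr h3
      rw [gen_order r hr ρ hρ, Nat.cast_sub hp1.le] at h4
      simpa using h4
    have hfu : IsUnit f := unit_sub n hmn
    have hγu : IsUnit γ := by
      refine unit_sub (n + T) fun h => hmn ?_
      have h5 : (p : ℤ) - 1 ∣ (T : ℤ) := by
        refine ⟨t, ?_⟩
        rw [hTdef]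
        push_cast [Nat.cast_sub hp1.le]
        ring
      have h6 : m - n = (m - (n + T : ℕ)) + T := by
        push_cast
        ring
      rw [h6]
      exact dvd_add h h5
    obtain ⟨E⟩ := reduce 0 (by simp) (by simp) (by simp)
      ⟨γ * f, hγu.mul hfu, .inr (.inr (by simp))⟩
    have : Subsingleton (ZMod (p ^ 0)) := by rw [pow_zero]; infer_instance
    exact E.toEquiv.subsingleton
  · intro i hm e h1 h2 h3
    have hRm : ((R ^ m : (ZLoc p)ˣ) : ZLoc p) = (R : ZLoc p) ^ n * (X ^ i : (ZLoc p)ˣ) := by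
      rw [← Units.val_pow_eq_pow_val, ← Units.val_mul, hXdef, hm, zpow_add, zpow_natCast,
        ← zpow_natCast R (p - 1), ← zpow_mul, Nat.cast_sub hp1.le]
      simp
    have hRT : (R : ZLoc p) ^ T = (X ^ (t : ℤ) : (ZLoc p)ˣ) := by
      rw [hXt, Units.val_pow_eq_pow_val]
    obtain ⟨⟨hA, hB, hC⟩, v, hv, hex⟩ := det_min hodd X κ hκu hX n t T hn hT htp i e h1 h2 h3 p _ _ _ _ _
      rfl rfl rfl rfl rfl rfl
    set xi : ZLoc p := ((X ^ i : (ZLoc p)ˣ) : ZLoc p)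
    set xt : ZLoc p := ((X ^ (t : ℤ) : (ZLoc p)ˣ) : ZLoc p)
    have hf' : f = -(R : ZLoc p) ^ n * (xi - 1) := by rw [hf, hRm]; ring
    have hRu : IsUnit ((R : ZLoc p) ^ n) := R.isUnit.pow n
    have eA : (p : ZLoc p) ^ (n + T) * f
        = -(R : ZLoc p) ^ n * ((p : ZLoc p) ^ (n + T) * (xi - 1)) := by rw [hf']; ring
    have eB : (p : ZLoc p) ^ n * w - β * f = (u * (R : ZLoc p) ^ n) *
        ((p : ZLoc p) ^ (n - 1) * (xt - xi + (p : ZLoc p) ^ T * (xi - 1))) := by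
      obtain ⟨N, rfl⟩ := Nat.exists_eq_add_of_le' hn
      rw [hf', hw, hβ, Nat.add_sub_cancel]
      linear_combination (-(p : ZLoc p) ^ N * u * (R : ZLoc p) ^ (N + 1)) * (hgT.symm.trans hRT).symm
    have eC : γ * f = -((R : ZLoc p) ^ n) ^ 2 * ((xt - xi) * (xi - 1)) := by
      rw [hf', hγ, hRm, pow_add, hRT]; ring
    refine reduce e (eA ▸ hA.mul_left _) (eB ▸ hB.mul_left _) (eC ▸ hC.mul_left _) ?_
    rcases hex with h | h | h
    · exact ⟨_, hRu.neg.mul hv, .inl (by rw [eA, h]; ring)⟩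
    · exact ⟨_, (hu.mul hRu).mul hv, .inr (.inl (by rw [eB, h]; ring))⟩
    · exact ⟨_, (hRu.pow 2).neg.mul hv, .inr (.inr (by rw [eC, h]; ring))⟩

end
end

section
/- Let p be an odd prime, r an integer whose residue class generates (ℤ/p²)ˣ, u a unit of ℤ_(p), and n ≥ 2 an integer. For an integer m, let Q_m be the quotient of the free ℤ_(p)-module on two generators x, y by the submodule generated by p^{n+p(p-1)}·y; p^n·x + u·p^{n-2}(p^{p(p-1)}-1)·y; (r^{n+p(p-1)} - r^m)·y; and (r^n - r^m)·x + (u/p²)·r^n(r^{p(p-1)}-1)·y. Then Q_m = 0 if m is not congruent to n modulo p-1; and if m = n + (p-1)i for an integer i, then Q_m is cyclic of order p^e, where e = min(n-1, 2) if ν_p(i) = 0; e = min(n, ν_p(i)+3) if ν_p(i-p) = 1; e = min(n+p(p-1), ν_p(i-p)+3) if ν_p(i-p) > 1 and n ≥ 4; and e = min(4+p(p-1), ν_p(i - p - p^{p(p-1)+1}) + n - 1) if ν_p(i-p) > 1 and 2 ≤ n ≤ 3. -/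
/-!
Write `N = p (p - 1)` and `k = m - n`. Since `r` generates the units modulo `p²`,
`r ^ N = 1 + p² δ` with `δ` a unit of `ℤ_(p)`, so the coefficient of `y` in the fourth relation is
the unit `u r ^ n δ`. That relation therefore says `y = c x` with `c = (u δ)⁻¹ (r ^ k - 1)`, and the
quotient is cyclic on `x`, of order `p ^ e` with `e` the least valuation of the other three
relations rewritten in terms of `x` (`quotMod2_cyclic`, `quot_equiv_of_min`):

* `n + N + ν (r ^ k - 1)`,
* `n - 2 + ν T`, where `T = r ^ N - r ^ k + p ^ N (r ^ k - 1)` (`relTwo`),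
* `ν (r ^ N - r ^ k) + ν (r ^ k - 1)`.

If `p - 1 ∤ k`, the third one is `0`. If `k = (p - 1) i`, lifting the exponent gives
`ν (r ^ k - 1) = 1 + ν i` and `ν (r ^ N - r ^ k) = 1 + ν (i - p)`. This determines `ν T` unless the
two summands of `T` have the same valuation. That happens only for `ν (i - p) = N + 1`, where the
congruence `T ≡ - δ p (i - p - p ^ (N + 1))` modulo `p ^ (N + 4)` is precise enough
(`min_emultiplicity_relTwo`). The rest is the case distinction `order_exponent`.
-/

set_option synthInstance.maxHeartbeats 1000000
set_option maxHeartbeats 1000000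

noncomputable section

/-! ### Valuations and congruences for powers -/

theorem nuE_eq_emultiplicity (p : ℕ) [hp : Fact p.Prime] (x : ℤ) :
    nuE p x = emultiplicity (p : ℤ) x := by
  unfold nuE
  split_ifs with h
  · simp [h]
  · rw [padicValInt, padicValNat_eq_emultiplicity (Int.natAbs_ne_zero.mpr h),
      ← Int.natCast_emultiplicity, Int.natCast_natAbs]
    rcases abs_choice x with h | h <;> rw [h]
    rw [emultiplicity_neg]

section CommRingLemmas

variable {R : Type*} [CommRing R]

theorem exists_pow_taylor (B : R) (k : ℕ) :
    ∃ g : R, B ^ k = 1 + k * (B - 1) + (k.choose 2 : ℕ) * (B - 1) ^ 2 + (B - 1) ^ 3 * g := by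
  induction k with
  | zero => exact ⟨0, by simp⟩
  | succ k ih =>
    obtain ⟨g, hg⟩ := ih
    refine ⟨g * B + (k.choose 2 : ℕ), ?_⟩
    rw [pow_succ, hg, Nat.choose_succ_succ' k 1, Nat.choose_one_right]
    push_cast
    ring

/-- The quadratic Taylor term gains a factor `p` from `p ∣ p.choose 2`, which is where oddness of
`p` enters. -/
theorem pow_prime_congr {p : ℕ} (hp : p.Prime) (hodd : Odd p) {B : R} (j : ℕ)
    (hB : (p : R) ^ (j + 2) ∣ B - 1) :
    (p : R) ^ (j + 5) ∣ B ^ p - 1 - p * (B - 1) := by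
  obtain ⟨g, hg⟩ := exists_pow_taylor B p
  obtain ⟨c, hc⟩ := hB
  have hch : p ∣ p.choose 2 := hp.dvd_choose_self two_ne_zero (by
    rcases hp.two_le.lt_or_eq with h | h
    · exact h
    · subst h; exact absurd hodd (by decide))
  obtain ⟨d, hd⟩ := hch
  rw [hg, hc, hd]
  refine ⟨(d * p ^ j * c ^ 2 + p ^ (2 * j + 1) * c ^ 3 * g), ?_⟩
  push_cast
  ring

/-- Iterating `pow_prime_congr` keeps the relative precision `p²` of the first-order expansion. -/
theorem pow_prime_pow_congr {p : ℕ} (hp : p.Prime) (hodd : Odd p) {A : R}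
    (hA : (p : R) ^ 2 ∣ A - 1) (j : ℕ) :
    (p : R) ^ (j + 4) ∣ A ^ p ^ j - 1 - p ^ j * (A - 1) := by
  induction j with
  | zero => simp
  | succ j ih =>
    obtain ⟨c, hc⟩ := ih
    obtain ⟨a, ha⟩ := hA
    have hB : (p : R) ^ (j + 2) ∣ A ^ p ^ j - 1 :=
      ⟨a + p ^ 2 * c, by linear_combination hc + p ^ j * ha⟩
    obtain ⟨d, hd⟩ := pow_prime_congr hp hodd j hB
    refine ⟨d + c, ?_⟩
    rw [pow_succ p j, pow_mul]
    linear_combination hd + p * hc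

theorem sq_dvd_zpow_sub (B : Rˣ) (s : ℤ) :
    ((B : R) - 1) ^ 2 ∣ ((B ^ s : Rˣ) : R) - 1 - s * ((B : R) - 1) := by
  induction s using Int.induction_on with
  | zero => simp
  | succ k ih =>
    obtain ⟨c, hc⟩ := ih
    refine ⟨c * B + k, ?_⟩
    rw [zpow_add_one, Units.val_mul]
    push_cast at hc ⊢
    linear_combination (B : R) * hc
  | pred k ih =>
    obtain ⟨c, hc⟩ := ih
    have h1 : ((B ^ (-(k : ℤ)) : Rˣ) : R) = ((B ^ (-(k : ℤ) - 1) : Rˣ) : R) * B := by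
      rw [← Units.val_mul, ← zpow_add_one, sub_add_cancel]
    rw [h1] at hc
    refine ⟨(c + k + 1) * (B⁻¹ : Rˣ), ?_⟩
    have h2 : ((B⁻¹ : Rˣ) : R) * B = 1 := by simp
    push_cast at hc ⊢
    set X := ((B ^ (-(k : ℤ) - 1) : Rˣ) : R)
    set b : R := (B : R)
    set b' : R := ((B⁻¹ : Rˣ) : R)
    linear_combination b' * hc + (-X + 1 -(k + 1) * (b - 1)) * h2

end CommRingLemmas

/-! ### The local ring `ℤ_(p)` and cyclic quotients -/

section Localization

variable {p : ℕ} [hp : Fact p.Prime]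

theorem inv_natCast_mem_ZLoc {b : ℕ} (hb : ¬ p ∣ b) : (b : ℚ)⁻¹ ∈ ZLoc p := by
  change ¬ p ∣ ((b : ℚ)⁻¹).den
  have hb0 : b ≠ 0 := by rintro rfl; exact hb (dvd_zero _)
  rwa [Rat.inv_natCast_den_of_pos (Nat.pos_of_ne_zero hb0)]

theorem ZLoc_mul_den (x : ZLoc p) : x * ((x : ℚ).den : ZLoc p) = ((x : ℚ).num : ZLoc p) := by
  apply Subtype.ext
  push_cast
  exact Rat.mul_den_eq_num _

theorem isUnit_natCast_ZLoc {b : ℕ} (hb : ¬ p ∣ b) : IsUnit (b : ZLoc p) := by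
  have hb0 : (b : ℚ) ≠ 0 := by
    rw [Nat.cast_ne_zero]; rintro rfl; exact hb (dvd_zero _)
  refine IsUnit.of_mul_eq_one ⟨_, inv_natCast_mem_ZLoc hb⟩ ?_
  apply Subtype.ext
  push_cast
  exact mul_inv_cancel₀ hb0

theorem isUnit_intCast_ZLoc {b : ℤ} (hb : ¬ (p : ℤ) ∣ b) : IsUnit (b : ZLoc p) := by
  have h := isUnit_natCast_ZLoc (p := p) (b := b.natAbs) (by rwa [← Int.natCast_dvd])
  rcases Int.natAbs_eq b with hb' | hb'
  · rw [hb', Int.cast_natCast]; exact h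
  · rw [hb', Int.cast_neg, Int.cast_natCast]; exact h.neg

theorem ZLoc_isUnit_den (x : ZLoc p) : IsUnit ((x : ℚ).den : ZLoc p) :=
  isUnit_natCast_ZLoc x.2

theorem pow_dvd_intCast_ZLoc (k : ℕ) (a : ℤ) :
    (p : ZLoc p) ^ k ∣ (a : ZLoc p) ↔ (p : ℤ) ^ k ∣ a := by
  constructor
  · rintro ⟨c, hc⟩
    have h1 := ZLoc_mul_den c
    have h2 : (a : ZLoc p) * ((c : ℚ).den : ZLoc p) = p ^ k * ((c : ℚ).num : ZLoc p) := by
      rw [hc, mul_assoc, h1]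
    have h3 : a * ((c : ℚ).den : ℤ) = (p : ℤ) ^ k * (c : ℚ).num := by
      have := congrArg (Subtype.val) h2
      push_cast at this
      exact_mod_cast this
    have hcop : IsCoprime ((p : ℤ) ^ k) ((c : ℚ).den : ℤ) := by
      apply IsCoprime.pow_left
      exact Nat.isCoprime_iff_coprime.mpr ((Nat.Prime.coprime_iff_not_dvd hp.out).mpr c.2)
    exact hcop.dvd_of_dvd_mul_right ⟨_, h3⟩
  · rintro ⟨c, rfl⟩
    exact ⟨c, by push_cast; rfl⟩

theorem emultiplicity_intCast_ZLoc (a : ℤ) :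
    emultiplicity (p : ZLoc p) (a : ZLoc p) = emultiplicity (p : ℤ) a :=
  emultiplicity_eq_emultiplicity_iff.mpr fun n => pow_dvd_intCast_ZLoc n a

theorem ZLoc_isUnit_of_not_dvd {x : ZLoc p} (hx : ¬ (p : ZLoc p) ∣ x) : IsUnit x := by
  have h := ZLoc_mul_den x
  have hnum : ¬ (p : ℤ) ∣ (x : ℚ).num := by
    intro hd
    have := (pow_dvd_intCast_ZLoc (p := p) 1 _).mpr (by simpa using hd)
    rw [← h, pow_one, (ZLoc_isUnit_den x).dvd_mul_right] at this
    exact hx this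
  have := isUnit_intCast_ZLoc hnum
  rw [← h] at this
  exact isUnit_of_mul_isUnit_left this

theorem ZLoc_prime : Prime (p : ZLoc p) := by
  refine ⟨?_, ?_, ?_⟩
  · intro h
    have := congrArg Subtype.val h
    push_cast at this
    exact hp.out.ne_zero (by exact_mod_cast this)
  · intro h
    have h1 : (p : ZLoc p) ^ 1 ∣ ((1 : ℤ) : ZLoc p) := by
      rw [pow_one]; exact h.dvd
    rw [pow_dvd_intCast_ZLoc, pow_one] at h1
    exact hp.out.one_lt.ne' (by exact_mod_cast Int.eq_one_of_dvd_one (by positivity) h1)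
  · intro a b hab
    by_cases ha : (p : ZLoc p) ∣ a
    · exact Or.inl ha
    · exact Or.inr (((ZLoc_isUnit_of_not_dvd ha).dvd_mul_left).mp hab)

/-- Reduction modulo `p ^ e`, obtained through the embedding of `ℤ_(p)` in the `p`-adic
integers. -/
theorem exists_reduction (p : ℕ) [hp : Fact p.Prime] (e : ℕ) : ∃ φ : ZLoc p →+* ZMod (p ^ e),
    ∀ x, φ x = 0 ↔ (p : ZLoc p) ^ e ∣ x := by
  let ι : ZLoc p →+* ℤ_[p] :=
    RingHom.codRestrict ((algebraMap ℚ ℚ_[p]).comp (ZLoc p).subtype) (PadicInt.subring p)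
      (fun x => by
        have := Padic.norm_rat_le_one (p := p) x.2
        simpa [PadicInt.mem_subring_iff] using this)
  refine ⟨(PadicInt.toZModPow e).comp ι, fun x => ?_⟩
  have h := congrArg ((PadicInt.toZModPow e).comp ι) (ZLoc_mul_den x)
  rw [map_mul, map_natCast, map_intCast] at h
  have hunit := (ZLoc_isUnit_den x).map ((PadicInt.toZModPow e).comp ι)
  rw [map_natCast] at hunit
  constructor
  · intro h0
    rw [h0, zero_mul] at h
    have h1 := (ZMod.intCast_zmod_eq_zero_iff_dvd _ _).mp h.symm
    have h2 := (pow_dvd_intCast_ZLoc (p := p) e (x : ℚ).num).mpr (by exact_mod_cast h1)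
    rw [← ZLoc_mul_den] at h2
    exact ((ZLoc_isUnit_den x).dvd_mul_right).mp h2
  · rintro ⟨c, rfl⟩
    rw [map_mul, map_pow, map_natCast, ← Nat.cast_pow, ZMod.natCast_self, zero_mul]

/-- If the relation `a x + b y` has `b` a unit, then `y` becomes the multiple `c x` of `x`, and
the quotient is cyclic on `x`. Its order is `p ^ e` when `p ^ e` divides every relation rewritten in
terms of `x`, and `e` is the exact valuation of one of them. -/
theorem quotMod2_cyclic (s : Set (Fin 2 → ℚ)) (c : ZLoc p) (e : ℕ)
    (hs : ∀ v ∈ s, ∃ a b : ZLoc p, v = ![(a : ℚ), (b : ℚ)] ∧ (p : ZLoc p) ^ e ∣ a + c * b)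
    (hy : ∃ a b : ZLoc p, ![(a : ℚ), (b : ℚ)] ∈ s ∧ IsUnit b ∧ a + c * b = 0)
    (hx : ∃ a b : ZLoc p, ![(a : ℚ), (b : ℚ)] ∈ s ∧
      emultiplicity (p : ZLoc p) (a + c * b) = e) :
    Nonempty (QuotMod2 p s ≃+ ZMod (p ^ e)) := by
  obtain ⟨φ, hφ⟩ := exists_reduction p e
  have hmem : ∀ v ∈ latt2 p, v 0 ∈ ZLoc p ∧ v 1 ∈ ZLoc p := by
    intro v hv
    induction hv using Submodule.span_induction with
    | mem x h =>
      rcases h with rfl | rfl <;> simp [zero_mem, one_mem]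
    | zero => simp [zero_mem]
    | add x y _ _ hx hy => exact ⟨add_mem hx.1 hy.1, add_mem hx.2 hy.2⟩
    | smul a x _ hx => exact ⟨mul_mem a.2 hx.1, mul_mem a.2 hx.2⟩
  -- `ψ` sends `x` to `1` and `y` to `c`
  let ψ : latt2 p →+ ZMod (p ^ e) :=
    { toFun := fun v => φ (⟨v.1 0, (hmem v.1 v.2).1⟩ + c * ⟨v.1 1, (hmem v.1 v.2).2⟩)
      map_zero' := by
        convert map_zero φ
        apply Subtype.ext; simp
      map_add' := by
        intro v w
        rw [← map_add]
        congr 1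
        apply Subtype.ext; simp; ring }
  have hlat : ∀ a b : ZLoc p, ![(a : ℚ), (b : ℚ)] ∈ latt2 p := by
    intro a b
    have h0 : (![1, 0] : Fin 2 → ℚ) ∈ latt2 p := Submodule.subset_span (by simp)
    have h1 : (![0, 1] : Fin 2 → ℚ) ∈ latt2 p := Submodule.subset_span (by simp)
    have := add_mem (Submodule.smul_mem _ a h0) (Submodule.smul_mem _ b h1)
    convert this using 1
    ext i; fin_cases i <;> simp [Subring.smul_def]
  have hψ : ∀ (a b : ZLoc p) (h), ψ ⟨![(a : ℚ), (b : ℚ)], h⟩ = φ (a + c * b) :=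
    fun a b h => rfl
  have hsurj : Function.Surjective ψ := by
    intro z
    obtain ⟨k, rfl⟩ := ZMod.intCast_surjective z
    refine ⟨⟨![((k : ZLoc p) : ℚ), ((0 : ZLoc p) : ℚ)], hlat _ _⟩, ?_⟩
    rw [hψ]; simp
  have hker : (Submodule.comap (latt2 p).subtype (Submodule.span (ZLoc p) s)).toAddSubgroup
      = ψ.ker := by
    apply le_antisymm
    · rintro ⟨v, hv⟩ h
      have h' : v ∈ Submodule.span (ZLoc p) s := h
      have key : ∃ a b : ZLoc p, v = ![(a : ℚ), (b : ℚ)] ∧ (p : ZLoc p) ^ e ∣ a + c * b := by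
        clear h hv
        induction h' using Submodule.span_induction with
        | mem x h => exact hs x h
        | zero => exact ⟨0, 0, by ext i; fin_cases i <;> simp, by simp⟩
        | add x y _ _ hx hy =>
          obtain ⟨a, b, rfl, h1⟩ := hx
          obtain ⟨a', b', rfl, h2⟩ := hy
          refine ⟨a + a', b + b', by ext i; fin_cases i <;> simp, ?_⟩
          convert dvd_add h1 h2 using 1
          ring
        | smul t x _ hx =>
          obtain ⟨a, b, rfl, h1⟩ := hx
          refine ⟨t * a, t * b, by ext i; fin_cases i <;> simp [Subring.smul_def], ?_⟩
          convert Dvd.dvd.mul_left h1 t using 1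
          ring
      obtain ⟨a, b, rfl, hab⟩ := key
      rw [AddMonoidHom.mem_ker, hψ, hφ]
      exact hab
    · rintro ⟨v, hv⟩ h
      obtain ⟨a, b, rfl⟩ : ∃ a b : ZLoc p, v = ![(a : ℚ), (b : ℚ)] :=
        ⟨⟨_, (hmem v hv).1⟩, ⟨_, (hmem v hv).2⟩, by ext i; fin_cases i <;> simp⟩
      rw [AddMonoidHom.mem_ker, hψ, hφ] at h
      change ![(a : ℚ), (b : ℚ)] ∈ Submodule.span (ZLoc p) s
      obtain ⟨a₁, b₁, hm₁, hu₁, h₁⟩ := hy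
      obtain ⟨a₂, b₂, hm₂, h₂⟩ := hx
      obtain ⟨b₁', hb₁'⟩ := hu₁.exists_left_inv
      obtain ⟨⟨w, hw⟩, hnd⟩ := emultiplicity_eq_coe.mp h₂
      have hwu : IsUnit w := by
        apply ZLoc_isUnit_of_not_dvd
        rintro ⟨w', rfl⟩
        exact hnd ⟨w', by rw [hw]; ring⟩
      obtain ⟨w', hw'⟩ := hwu.exists_left_inv
      obtain ⟨t, ht⟩ := h
      have hmem := add_mem
        (Submodule.smul_mem (Submodule.span (ZLoc p) s) (t * w') (Submodule.subset_span hm₂))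
        (Submodule.smul_mem (Submodule.span (ZLoc p) s) ((b - t * w' * b₂) * b₁')
          (Submodule.subset_span hm₁))
      have e0 : a = (t * w') * a₂ + ((b - t * w' * b₂) * b₁') * a₁ := by
        linear_combination ht - t * w' * hw - ((b - t * w' * b₂) * b₁') * h₁
          - t * p ^ e * hw' + c * (b - t * w' * b₂) * hb₁'
      have e1 : b = (t * w') * b₂ + ((b - t * w' * b₂) * b₁') * b₁ := by
        linear_combination -(b - t * w' * b₂) * hb₁'
      convert hmem using 1
      ext i
      fin_cases i
      · simpa [Subring.smul_def] using congrArg Subtype.val e0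
      · simpa [Subring.smul_def] using congrArg Subtype.val e1
  exact ⟨(QuotientAddGroup.quotientAddEquivOfEq hker).trans
    (QuotientAddGroup.quotientKerEquivOfSurjective ψ hsurj)⟩

end Localization

/-! ### Powers of a generator modulo `p²` -/

section Generator

variable {p : ℕ} [hp : Fact p.Prime] {r : ℤ}

theorem exists_unit_of_generator
    (hodd : Odd p)
    (hr : ∀ v : (ZMod (p ^ 2))ˣ, ∃ j : ℕ, (v : ZMod (p ^ 2)) = (r : ZMod (p ^ 2)) ^ j) :
    ∃ ρ : (ZMod (p ^ 2))ˣ, (ρ : ZMod (p ^ 2)) = r ∧ orderOf ρ = p * (p - 1) := by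
  have h3 : 3 ≤ p := by
    rcases hp.out.two_le.lt_or_eq with h | h
    · exact h
    · rw [← h] at hodd; exact absurd hodd (by decide)
  have hlt : Fact (2 < p ^ 2) := ⟨by nlinarith⟩
  have hne : (-1 : ZMod (p ^ 2)) ≠ 1 := ZMod.neg_one_ne_one
  obtain ⟨j, hj⟩ := hr (-1)
  have hj0 : j ≠ 0 := by
    rintro rfl
    exact hne (by simpa using hj)
  have hu : IsUnit (r : ZMod (p ^ 2)) := by
    rw [← isUnit_pow_iff hj0, ← hj]
    exact Units.isUnit _
  obtain ⟨ρ, hρ⟩ := hu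
  refine ⟨ρ, hρ, ?_⟩
  have hcard := orderOf_eq_card_of_forall_mem_zpowers (g := ρ) (fun v => by
    obtain ⟨j, hj⟩ := hr v
    refine ⟨j, ?_⟩
    apply Units.ext
    simp [hj, hρ])
  have : NeZero (p ^ 2) := ⟨by positivity⟩
  rw [hcard, Nat.card_eq_fintype_card, ZMod.card_units_eq_totient,
    Nat.totient_prime_pow hp.out (by norm_num)]
  simp

theorem sq_dvd_pow_sub_one_iff {ρ : (ZMod (p ^ 2))ˣ} (hρ : (ρ : ZMod (p ^ 2)) = r)
    (ho : orderOf ρ = p * (p - 1)) (d : ℕ) :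
    (p : ℤ) ^ 2 ∣ r ^ d - 1 ↔ p * (p - 1) ∣ d := by
  rw [← ho, orderOf_dvd_iff_pow_eq_one, Units.ext_iff]
  have := ZMod.intCast_zmod_eq_zero_iff_dvd (r ^ d - 1) (p ^ 2)
  push_cast at this
  rw [← this]
  push_cast
  rw [hρ, sub_eq_zero]

theorem not_dvd_of_generator {ρ : (ZMod (p ^ 2))ˣ} (hρ : (ρ : ZMod (p ^ 2)) = r)
    (ho : orderOf ρ = p * (p - 1)) : ¬ (p : ℤ) ∣ r := by
  intro h
  have h1 := (sq_dvd_pow_sub_one_iff hρ ho (p * (p - 1))).mpr dvd_rfl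
  have h2 : (p : ℤ) ∣ r ^ (p * (p - 1)) :=
    h.trans (dvd_pow_self r (Nat.mul_ne_zero hp.out.ne_zero
      (Nat.sub_ne_zero_of_lt hp.out.one_lt)))
  have h3 : (p : ℤ) ∣ 1 := by
    have := dvd_sub h2 ((dvd_pow_self (p : ℤ) two_ne_zero).trans h1)
    simpa using this
  exact hp.out.one_lt.ne' (by exact_mod_cast Int.eq_one_of_dvd_one (by positivity) h3)

/-- If `r ^ d ≡ 1` modulo `p`, then `r ^ (d p) ≡ 1` modulo `p²`, and the order of `r` modulo `p²`
is known. -/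
theorem dvd_exponent_of_dvd_pow_sub_one {ρ : (ZMod (p ^ 2))ˣ} (hρ : (ρ : ZMod (p ^ 2)) = r)
    (ho : orderOf ρ = p * (p - 1)) {d : ℕ} (hd : (p : ℤ) ∣ r ^ d - 1) : p - 1 ∣ d := by
  have h := dvd_sub_pow_of_dvd_sub (R := ℤ) (p := p) (a := r ^ d) (b := 1) hd 1
  rw [pow_one, one_pow, ← pow_mul, one_add_one_eq_two,
    sq_dvd_pow_sub_one_iff hρ ho, mul_comm d] at h
  exact Nat.dvd_of_mul_dvd_mul_left hp.out.pos h

theorem emultiplicity_pow_pred_sub_one {ρ : (ZMod (p ^ 2))ˣ} (hρ : (ρ : ZMod (p ^ 2)) = r)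
    (ho : orderOf ρ = p * (p - 1)) : emultiplicity (p : ℤ) (r ^ (p - 1) - 1) = 1 := by
  rw [← Nat.cast_one (R := ℕ∞), emultiplicity_eq_coe, pow_one, one_add_one_eq_two,
    sq_dvd_pow_sub_one_iff hρ ho]
  constructor
  · have hcop : IsCoprime r p :=
      ((Nat.prime_iff_prime_int.mp hp.out).coprime_iff_not_dvd.mpr
        (not_dvd_of_generator hρ ho)).symm
    exact (Int.ModEq.pow_card_sub_one_eq_one hp.out hcop).symm.dvd
  · intro h
    have h1 := Nat.le_of_dvd (Nat.sub_pos_of_lt hp.out.one_lt) h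
    have h2 := hp.out.two_le
    have h3 : 0 < p - 1 := Nat.sub_pos_of_lt hp.out.one_lt
    nlinarith

theorem emultiplicity_zpow_sub_one_natAbs (U : (ZLoc p)ˣ) (k : ℤ) :
    emultiplicity (p : ZLoc p) (((U ^ k : (ZLoc p)ˣ) : ZLoc p) - 1) =
      emultiplicity (p : ZLoc p) ((U : ZLoc p) ^ k.natAbs - 1) := by
  rcases Int.natAbs_eq k with h | h
  · conv_lhs => rw [h, zpow_natCast, Units.val_pow_eq_pow_val]
  · have h1 : ((U ^ k : (ZLoc p)ˣ) : ZLoc p) - 1 =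
        -(((U ^ k : (ZLoc p)ˣ) : ZLoc p) * ((U : ZLoc p) ^ k.natAbs - 1)) := by
      have h2 : ((U ^ k : (ZLoc p)ˣ) : ZLoc p) * (U : ZLoc p) ^ k.natAbs = 1 := by
        rw [← Units.val_pow_eq_pow_val, ← Units.val_mul, ← zpow_natCast, ← zpow_add]
        have : k + (k.natAbs : ℤ) = 0 := by omega
        rw [this, zpow_zero, Units.val_one]
      linear_combination h2
    rw [h1, emultiplicity_neg, emultiplicity_mul ZLoc_prime,
      emultiplicity_of_unit_right ZLoc_prime.not_isUnit, zero_add]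

/-- Lifting the exponent for `r ^ (p - 1)`, with integer exponents. -/
theorem emultiplicity_zpow_sub_one (hodd : Odd p) {ρ : (ZMod (p ^ 2))ˣ}
    (hρ : (ρ : ZMod (p ^ 2)) = r) (ho : orderOf ρ = p * (p - 1))
    {U : (ZLoc p)ˣ} (hU : (U : ZLoc p) = r) (i : ℤ) :
    emultiplicity (p : ZLoc p) (((U ^ (((p : ℤ) - 1) * i) : (ZLoc p)ˣ) : ZLoc p) - 1) =
      1 + nuE p i := by
  have h1 : (((p : ℤ) - 1) * i).natAbs = (p - 1) * i.natAbs := by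
    rw [Int.natAbs_mul]
    congr 1
    have := hp.out.one_lt
    omega
  have h2 : (U : ZLoc p) ^ ((p - 1) * i.natAbs) - 1 =
      (((r ^ (p - 1)) ^ i.natAbs - 1 ^ i.natAbs : ℤ) : ZLoc p) := by
    rw [hU]; push_cast; rw [pow_mul, one_pow]
  have hem := emultiplicity_pow_pred_sub_one hρ ho
  have hdvd : (p : ℤ) ∣ r ^ (p - 1) - 1 :=
    emultiplicity_ne_zero.mp (by rw [hem]; exact one_ne_zero)
  rw [emultiplicity_zpow_sub_one_natAbs, h1, h2, emultiplicity_intCast_ZLoc,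
    Int.emultiplicity_pow_sub_pow hp.out hodd hdvd, hem, nuE_eq_emultiplicity,
    Int.emultiplicity_natAbs]
  exact fun h => not_dvd_of_generator hρ ho
    ((Nat.prime_iff_prime_int.mp hp.out).dvd_of_dvd_pow h)

theorem emultiplicity_zpow_sub_one_of_not_dvd {ρ : (ZMod (p ^ 2))ˣ}
    (hρ : (ρ : ZMod (p ^ 2)) = r) (ho : orderOf ρ = p * (p - 1))
    {U : (ZLoc p)ˣ} (hU : (U : ZLoc p) = r) {k : ℤ} (hk : ¬ ((p : ℤ) - 1) ∣ k) :
    emultiplicity (p : ZLoc p) (((U ^ k : (ZLoc p)ˣ) : ZLoc p) - 1) = 0 := by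
  have h2 : (U : ZLoc p) ^ k.natAbs - 1 = ((r ^ k.natAbs - 1 : ℤ) : ZLoc p) := by
    rw [hU]; push_cast; rfl
  rw [emultiplicity_zpow_sub_one_natAbs, h2, emultiplicity_intCast_ZLoc, emultiplicity_eq_zero]
  intro h
  apply hk
  have h3 := Int.natCast_dvd.mpr (dvd_exponent_of_dvd_pow_sub_one hρ ho h)
  rwa [Nat.cast_pred hp.out.pos] at h3

end Generator

/-! ### The order of the quotient -/

section Order

variable {p : ℕ} [hp : Fact p.Prime] {r : ℤ}

theorem min_emultiplicity_congr {R : Type*} [CommRing R] {q x y : R} {M : ℕ}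
    (h : q ^ M ∣ x - y) : min (M : ℕ∞) (emultiplicity q x) = min (M : ℕ∞) (emultiplicity q y) := by
  have key : ∀ x y : R, q ^ M ∣ x - y →
      min (M : ℕ∞) (emultiplicity q x) ≤ min (M : ℕ∞) (emultiplicity q y) := by
    intro x y h
    refine le_min (min_le_left _ _) ?_
    have h1 : (M : ℕ∞) ≤ emultiplicity q (-(x - y)) := by
      rw [emultiplicity_neg]; exact le_emultiplicity_of_pow_dvd h
    calc min (M : ℕ∞) (emultiplicity q x)
        ≤ min (emultiplicity q (-(x - y))) (emultiplicity q x) := min_le_min_right _ h1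
      _ ≤ emultiplicity q (-(x - y) + x) := min_le_emultiplicity_add
      _ = emultiplicity q y := by congr 1; ring
  refine le_antisymm (key x y h) (key y x ?_)
  rw [← neg_sub]; exact h.neg_right

/-- The second relation after the elimination of `y`, multiplied by `δ p ^ (2 - n)`; `U` stands for
the unit `r`. -/
def relTwo (p : ℕ) [Fact p.Prime] (U : (ZLoc p)ˣ) (k : ℤ) : ZLoc p :=
  (U : ZLoc p) ^ (p * (p - 1)) - ((U ^ k : (ZLoc p)ˣ) : ZLoc p) +
    (p : ZLoc p) ^ (p * (p - 1)) * (((U ^ k : (ZLoc p)ˣ) : ZLoc p) - 1)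

/-- The four defining relations of `Q_m`. -/
def relations (p : ℕ) [Fact p.Prime] (r : ℤ) (u : ZLoc p) (n : ℕ) (m : ℤ) : Set (Fin 2 → ℚ) :=
  {![0, (p : ℚ) ^ (n + p * (p - 1))],
   ![(p : ℚ) ^ n, (u : ℚ) * (p : ℚ) ^ (n - 2) * ((p : ℚ) ^ (p * (p - 1)) - 1)],
   ![0, (r : ℚ) ^ (n + p * (p - 1)) - (r : ℚ) ^ m],
   ![(r : ℚ) ^ n - (r : ℚ) ^ m,
     ((u : ℚ) / (p : ℚ) ^ 2) * (r : ℚ) ^ n * ((r : ℚ) ^ (p * (p - 1)) - 1)]}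

theorem emultiplicity_pow_sub_zpow (U : (ZLoc p)ˣ) (N : ℕ) (k : ℤ) :
    emultiplicity (p : ZLoc p) ((U : ZLoc p) ^ N - ((U ^ k : (ZLoc p)ˣ) : ZLoc p)) =
      emultiplicity (p : ZLoc p) (((U ^ (k - N) : (ZLoc p)ˣ) : ZLoc p) - 1) := by
  have h : (U : ZLoc p) ^ N - ((U ^ k : (ZLoc p)ˣ) : ZLoc p) =
      -(((U ^ N : (ZLoc p)ˣ) : ZLoc p) * (((U ^ (k - N) : (ZLoc p)ˣ) : ZLoc p) - 1)) := by
    rw [mul_sub, ← Units.val_mul, ← zpow_natCast, ← zpow_add, add_sub_cancel, zpow_natCast,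
      Units.val_pow_eq_pow_val]
    ring
  rw [h, emultiplicity_neg, emultiplicity_mul ZLoc_prime,
    emultiplicity_of_unit_right ZLoc_prime.not_isUnit, zero_add]

theorem nuE_self (p : ℕ) [hp : Fact p.Prime] : nuE p p = 1 := by
  rw [nuE_eq_emultiplicity]
  simpa using emultiplicity_pow_self_of_prime (Nat.prime_iff_prime_int.mp hp.out) 1

/-- `r ^ (p (p - 1)) = 1 + p² δ` with `δ` a unit. -/
theorem exists_delta (hodd : Odd p) {ρ : (ZMod (p ^ 2))ˣ}
    (hρ : (ρ : ZMod (p ^ 2)) = r) (ho : orderOf ρ = p * (p - 1))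
    {U : (ZLoc p)ˣ} (hU : (U : ZLoc p) = r) :
    ∃ δ : (ZLoc p)ˣ, (U : ZLoc p) ^ (p * (p - 1)) - 1 = (p : ZLoc p) ^ 2 * δ := by
  have h := emultiplicity_zpow_sub_one hodd hρ ho hU p
  have hN : ((p : ℤ) - 1) * p = ((p * (p - 1) : ℕ) : ℤ) := by
    rw [Nat.cast_mul, Nat.cast_pred hp.out.pos]; ring
  rw [nuE_self, hN, zpow_natCast, Units.val_pow_eq_pow_val, one_add_one_eq_two] at h
  obtain ⟨⟨w, hw⟩, hnd⟩ := emultiplicity_eq_coe.mp (h.trans (Nat.cast_ofNat (n := 2)).symm)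
  have hwu : IsUnit w := by
    apply ZLoc_isUnit_of_not_dvd
    rintro ⟨w', rfl⟩
    exact hnd ⟨w', by rw [hw]; ring⟩
  exact ⟨hwu.unit, hw⟩

/-- The order of the quotient in terms of the valuations of the first three relations after the
elimination of `y`. -/
theorem quot_equiv_of_min (hodd : Odd p) {ρ : (ZMod (p ^ 2))ˣ}
    (hρ : (ρ : ZMod (p ^ 2)) = r) (ho : orderOf ρ = p * (p - 1))
    {U : (ZLoc p)ˣ} (hU : (U : ZLoc p) = r) (u : ZLoc p) (hu : IsUnit u)
    (n : ℕ) (hn : 2 ≤ n) (m k : ℤ) (hm : m = n + k) (e : ℕ) (α β : ℕ∞)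
    (hα : emultiplicity (p : ZLoc p) (((U ^ k : (ZLoc p)ˣ) : ZLoc p) - 1) = α)
    (hβ : emultiplicity (p : ZLoc p)
      (((U ^ (k - (p * (p - 1) : ℕ)) : (ZLoc p)ˣ) : ZLoc p) - 1) = β)
    (he : (e : ℕ∞) = min (min (((n + p * (p - 1) : ℕ) : ℕ∞) + α)
      (((n - 2 : ℕ) : ℕ∞) + emultiplicity (p : ZLoc p) (relTwo p U k))) (β + α)) :
    Nonempty (QuotMod2 p (relations p r u n m) ≃+ ZMod (p ^ e)) := by
  obtain ⟨δ, hδ⟩ := exists_delta hodd hρ ho hU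
  obtain ⟨w, rfl⟩ := hu
  obtain ⟨l, rfl⟩ := Nat.exists_eq_add_of_le' hn
  rw [Nat.add_sub_cancel] at he
  set N := p * (p - 1) with hN
  set K : ZLoc p := ((U ^ k : (ZLoc p)ˣ) : ZLoc p) with hK
  -- `hrel` below writes the relations with coordinates in `ℤ_(p)`
  have hrQ : ((U : ZLoc p) : ℚ) = (r : ℚ) := by rw [hU]; simp
  have hzQ : ∀ z : ℤ, (((U ^ z : (ZLoc p)ˣ) : ZLoc p) : ℚ) = (r : ℚ) ^ z := by
    intro z
    have := congrArg Units.val (map_zpow (Units.map (ZLoc p).subtype.toMonoidHom) U z)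
    rw [Units.val_zpow_eq_zpow_val] at this
    exact this.trans (congrArg (· ^ z) hrQ)
  have hUm : ((U ^ m : (ZLoc p)ˣ) : ZLoc p) = (U : ZLoc p) ^ (l + 2) * K := by
    rw [hm, zpow_add, Units.val_mul, zpow_natCast, Units.val_pow_eq_pow_val]
  have hmQ : (r : ℚ) ^ m = (((U : ZLoc p) ^ (l + 2) * K : ZLoc p) : ℚ) := by
    rw [← hUm, hzQ]
  have hp0 : (p : ℚ) ≠ 0 := by exact_mod_cast hp.out.ne_zero
  have hδQ : (r : ℚ) ^ N - 1 = (p : ℚ) ^ 2 * ((δ : ZLoc p) : ℚ) := by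
    have := congrArg Subtype.val hδ
    push_cast at this
    rwa [hrQ] at this
  have hrel : relations p r w (l + 2) m =
      {![((0 : ZLoc p) : ℚ), ((p ^ (l + 2 + N) : ZLoc p) : ℚ)],
       ![((p ^ (l + 2) : ZLoc p) : ℚ), ((w * p ^ l * (p ^ N - 1) : ZLoc p) : ℚ)],
       ![((0 : ZLoc p) : ℚ), ((U ^ (l + 2 + N) - U ^ (l + 2) * K : ZLoc p) : ℚ)],
       ![((U ^ (l + 2) - U ^ (l + 2) * K : ZLoc p) : ℚ),
         ((w * U ^ (l + 2) * δ : ZLoc p) : ℚ)]} := by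
    have h4 : (((w : ZLoc p) : ℚ) / (p : ℚ) ^ 2) * (r : ℚ) ^ (l + 2) * ((r : ℚ) ^ N - 1) =
        ((w * U ^ (l + 2) * δ : ZLoc p) : ℚ) := by
      rw [hδQ]
      push_cast
      rw [hrQ]
      field_simp
    unfold relations
    rw [← hN, h4, hmQ]
    push_cast
    rw [hrQ]
  rw [hrel]
  let c : ZLoc p := ((w⁻¹ * δ⁻¹ : (ZLoc p)ˣ) : ZLoc p) * (K - 1)
  have hw' : (w : ZLoc p) * ((w⁻¹ : (ZLoc p)ˣ) : ZLoc p) = 1 := by simp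
  have hδ' : (δ : ZLoc p) * ((δ⁻¹ : (ZLoc p)ˣ) : ZLoc p) = 1 := by simp
  have hT : relTwo p U k = (U : ZLoc p) ^ N - K + p ^ N * (K - 1) := rfl
  have hunit : ∀ v : (ZLoc p)ˣ, emultiplicity (p : ZLoc p) (v : ZLoc p) = 0 :=
    emultiplicity_of_unit_right ZLoc_prime.not_isUnit
  have hc : emultiplicity (p : ZLoc p) c = α := by
    rw [emultiplicity_mul ZLoc_prime, hunit, hα, zero_add]
  have hpp : ∀ j : ℕ, emultiplicity (p : ZLoc p) ((p : ZLoc p) ^ j) = j :=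
    emultiplicity_pow_self_of_prime ZLoc_prime
  have f1 : emultiplicity (p : ZLoc p) (0 + c * (p : ZLoc p) ^ (l + 2 + N)) =
      ((l + 2 + N : ℕ) : ℕ∞) + α := by
    rw [zero_add, emultiplicity_mul ZLoc_prime, hc, hpp, add_comm]
  have f2 : emultiplicity (p : ZLoc p)
      ((p : ZLoc p) ^ (l + 2) + c * (w * p ^ l * (p ^ N - 1))) =
      (l : ℕ∞) + emultiplicity (p : ZLoc p) (relTwo p U k) := by
    have h : (p : ZLoc p) ^ (l + 2) + c * (w * p ^ l * (p ^ N - 1)) =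
        p ^ l * (((δ⁻¹ : (ZLoc p)ˣ) : ZLoc p) * relTwo p U k) := by
      simp only [c, Units.val_mul, hT]
      generalize ((w⁻¹ : (ZLoc p)ˣ) : ZLoc p) = w' at hw' ⊢
      generalize ((δ⁻¹ : (ZLoc p)ˣ) : ZLoc p) = δ' at hδ' ⊢
      linear_combination δ' * (K - 1) * p ^ l * (p ^ N - 1) * hw' - p ^ l * δ' * hδ
        - p ^ l * p ^ 2 * hδ'
    rw [h, emultiplicity_mul ZLoc_prime, emultiplicity_mul ZLoc_prime, hpp, hunit, zero_add]
  have f3 : emultiplicity (p : ZLoc p)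
      (0 + c * ((U : ZLoc p) ^ (l + 2 + N) - U ^ (l + 2) * K)) = β + α := by
    have h : (0 + c * ((U : ZLoc p) ^ (l + 2 + N) - U ^ (l + 2) * K)) =
        c * (((U ^ (l + 2) : (ZLoc p)ˣ) : ZLoc p) * ((U : ZLoc p) ^ N - K)) := by
      rw [Units.val_pow_eq_pow_val]; ring
    rw [h, emultiplicity_mul ZLoc_prime, hc, emultiplicity_mul ZLoc_prime, hunit, zero_add,
      emultiplicity_pow_sub_zpow, hβ, add_comm]
  have f4 : (U : ZLoc p) ^ (l + 2) - U ^ (l + 2) * K + c * (w * U ^ (l + 2) * δ) = 0 := by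
    simp only [c, Units.val_mul]
    generalize ((w⁻¹ : (ZLoc p)ˣ) : ZLoc p) = w' at hw' ⊢
    generalize ((δ⁻¹ : (ZLoc p)ˣ) : ZLoc p) = δ' at hδ' ⊢
    linear_combination (K - 1) * U ^ (l + 2) * δ * δ' * hw' + (K - 1) * U ^ (l + 2) * hδ'
  rw [← f1, ← f2, ← f3] at he
  apply quotMod2_cyclic _ c e
  · have hle := he.le
    rw [le_min_iff, le_min_iff] at hle
    rintro v (rfl | rfl | rfl | rfl)
    · exact ⟨_, _, rfl, pow_dvd_of_le_emultiplicity hle.1.1⟩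
    · exact ⟨_, _, rfl, pow_dvd_of_le_emultiplicity hle.1.2⟩
    · exact ⟨_, _, rfl, pow_dvd_of_le_emultiplicity hle.2⟩
    · exact ⟨_, _, rfl, by rw [f4]; exact dvd_zero _⟩
  · exact ⟨_, _, Or.inr (Or.inr (Or.inr rfl)),
      by rw [← Units.val_pow_eq_pow_val, ← Units.val_mul, ← Units.val_mul]; exact Units.isUnit _,
      f4⟩
  · rcases min_choice (min (emultiplicity (p : ZLoc p) (0 + c * (p : ZLoc p) ^ (l + 2 + N)))
      (emultiplicity (p : ZLoc p) ((p : ZLoc p) ^ (l + 2) + c * (w * p ^ l * (p ^ N - 1)))))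
      (emultiplicity (p : ZLoc p)
        (0 + c * ((U : ZLoc p) ^ (l + 2 + N) - U ^ (l + 2) * K))) with h | h
    · rcases min_choice (emultiplicity (p : ZLoc p) (0 + c * (p : ZLoc p) ^ (l + 2 + N)))
        (emultiplicity (p : ZLoc p) ((p : ZLoc p) ^ (l + 2) + c * (w * p ^ l * (p ^ N - 1))))
        with h' | h'
      · exact ⟨_, _, Or.inl rfl, by rw [he, h, h']⟩
      · exact ⟨_, _, Or.inr (Or.inl rfl), by rw [he, h, h']⟩
    · exact ⟨_, _, Or.inr (Or.inr (Or.inl rfl)), by rw [he, h]⟩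

/-- The case in which the first summand of `relTwo` dominates. -/
theorem emultiplicity_relTwo_of_lt (hodd : Odd p) {ρ : (ZMod (p ^ 2))ˣ}
    (hρ : (ρ : ZMod (p ^ 2)) = r) (ho : orderOf ρ = p * (p - 1))
    {U : (ZLoc p)ˣ} (hU : (U : ZLoc p) = r) (i : ℤ)
    (h : nuE p (i - p) < (p * (p - 1) : ℕ) + nuE p i) :
    emultiplicity (p : ZLoc p) (relTwo p U (((p : ℤ) - 1) * i)) = 1 + nuE p (i - p) := by
  have hk : ((p : ℤ) - 1) * i - (p * (p - 1) : ℕ) = ((p : ℤ) - 1) * (i - p) := by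
    rw [Nat.cast_mul, Nat.cast_pred hp.out.pos]; ring
  have h1 : emultiplicity (p : ZLoc p) ((U : ZLoc p) ^ (p * (p - 1)) -
      ((U ^ (((p : ℤ) - 1) * i) : (ZLoc p)ˣ) : ZLoc p)) = 1 + nuE p (i - p) := by
    rw [emultiplicity_pow_sub_zpow, hk, emultiplicity_zpow_sub_one hodd hρ ho hU]
  have h2 : emultiplicity (p : ZLoc p) ((p : ZLoc p) ^ (p * (p - 1)) *
      (((U ^ (((p : ℤ) - 1) * i) : (ZLoc p)ˣ) : ZLoc p) - 1)) =
      1 + (((p * (p - 1) : ℕ) : ℕ∞) + nuE p i) := by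
    rw [emultiplicity_mul ZLoc_prime, emultiplicity_pow_self_of_prime ZLoc_prime,
      emultiplicity_zpow_sub_one hodd hρ ho hU, add_left_comm]
  rw [relTwo, add_comm, emultiplicity_add_of_gt, h1]
  rw [h1, h2]
  exact (ENat.add_lt_add_iff_left ENat.one_ne_top).mpr h

/-- The delicate case, in which the two summands of `relTwo` may cancel: with
`i = p + p ^ (N + 1) s` one has `relTwo ≡ - δ p (i - p - p ^ (N + 1))` modulo `p ^ (N + 4)`. -/
theorem min_emultiplicity_relTwo (hodd : Odd p) {ρ : (ZMod (p ^ 2))ˣ}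
    (hρ : (ρ : ZMod (p ^ 2)) = r) (ho : orderOf ρ = p * (p - 1))
    {U : (ZLoc p)ˣ} (hU : (U : ZLoc p) = r) (i : ℤ)
    (h : ((p * (p - 1) + 1 : ℕ) : ℕ∞) ≤ nuE p (i - p)) :
    min ((p * (p - 1) + 4 : ℕ) : ℕ∞)
        (emultiplicity (p : ZLoc p) (relTwo p U (((p : ℤ) - 1) * i))) =
      min ((p * (p - 1) + 4 : ℕ) : ℕ∞) (1 + nuE p (i - p - (p : ℤ) ^ (p * (p - 1) + 1))) := by
  obtain ⟨δ, hδ⟩ := exists_delta hodd hρ ho hU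
  rw [nuE_eq_emultiplicity] at h
  -- `i = p + p ^ (N + 1) s`, hence `r ^ k = A * B ^ s` with `A = r ^ N` and `B = A ^ (p ^ N)`
  obtain ⟨s, hs⟩ := pow_dvd_of_le_emultiplicity h
  have hN2 : 2 ≤ p * (p - 1) := by
    have := hp.out.two_le
    exact this.trans (Nat.le_mul_of_pos_right _ (by omega))
  have hk : ((p : ℤ) - 1) * i = ((p * (p - 1) : ℕ) : ℤ) +
      ((p * (p - 1) : ℕ) : ℤ) * ((p ^ (p * (p - 1)) : ℕ) : ℤ) * s := by
    have hi : i = p + (p : ℤ) ^ (p * (p - 1) + 1) * s := by linear_combination hs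
    rw [hi, Nat.cast_mul, Nat.cast_pred hp.out.pos, Nat.cast_pow]
    ring
  set N := p * (p - 1) with hN
  have hUk : ((U ^ (((p : ℤ) - 1) * i) : (ZLoc p)ˣ) : ZLoc p) =
      (U : ZLoc p) ^ N * (((U ^ N) ^ p ^ N) ^ s : (ZLoc p)ˣ) := by
    rw [hk, zpow_add, zpow_mul, zpow_mul, zpow_natCast, zpow_natCast, Units.val_mul,
      Units.val_pow_eq_pow_val]
  obtain ⟨g, hg⟩ := pow_prime_pow_congr hp.out hodd (A := (U : ZLoc p) ^ N) ⟨_, hδ⟩ N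
  obtain ⟨g', hg'⟩ := sq_dvd_zpow_sub ((U ^ N) ^ p ^ N) s
  rw [Units.val_pow_eq_pow_val, Units.val_pow_eq_pow_val] at hg'
  have hD : emultiplicity (p : ZLoc p)
      (-((δ : ZLoc p) * (p * ((i - p - (p : ℤ) ^ (N + 1) : ℤ) : ZLoc p)))) =
      1 + nuE p (i - p - (p : ℤ) ^ (N + 1)) := by
    rw [emultiplicity_neg, emultiplicity_mul ZLoc_prime, emultiplicity_mul ZLoc_prime,
      emultiplicity_of_unit_right ZLoc_prime.not_isUnit, zero_add, emultiplicity_intCast_ZLoc,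
      nuE_eq_emultiplicity]
    congr 1
    simpa using emultiplicity_pow_self_of_prime (ZLoc_prime (p := p)) 1
  rw [← hD]
  apply min_emultiplicity_congr
  have hDs : ((i - p - (p : ℤ) ^ (N + 1) : ℤ) : ZLoc p) = p ^ (N + 1) * (s - 1) := by
    rw [hs]; push_cast; ring
  rw [hDs, relTwo, hUk, ← hN]
  generalize (((U ^ N) ^ p ^ N) ^ s : (ZLoc p)ˣ).val = X at hg' ⊢
  generalize ((U : ZLoc p) ^ N) ^ p ^ N = B at hg hg'
  generalize (U : ZLoc p) ^ N = A at hδ hg ⊢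
  obtain ⟨t, ht⟩ := Nat.exists_eq_add_of_le' hN2
  clear_value N
  subst ht
  have hA : A = 1 + p ^ 2 * δ := by linear_combination hδ
  subst hA
  have hB : B = 1 + p ^ (t + 4) * (δ + p ^ 2 * g) := by linear_combination hg
  subst hB
  have hX : X = 1 + p ^ (t + 4) * (s * (δ + p ^ 2 * g) +
      p ^ (t + 4) * (δ + p ^ 2 * g) ^ 2 * g') := by
    linear_combination hg'
  subst hX
  refine ⟨-(s * g + p ^ (t + 2) * (δ + p ^ 2 * g) ^ 2 * g') + (p ^ t - δ) *
    (s * (δ + p ^ 2 * g) + p ^ (t + 4) * (δ + p ^ 2 * g) ^ 2 * g') +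
    p ^ t * p ^ 2 * δ * (s * (δ + p ^ 2 * g) + p ^ (t + 4) * (δ + p ^ 2 * g) ^ 2 * g'), ?_⟩
  ring

/-- The relations between the valuations of `i`, `i - p` and `i - p - p ^ (N + 1)`. -/
theorem nuE_relations (p : ℕ) [hp : Fact p.Prime] (N : ℕ) (i : ℤ) :
    (nuE p i = 0 ↔ nuE p (i - p) = 0) ∧ (1 < nuE p (i - p) → nuE p i = 1) ∧
    (nuE p (i - p) < (N + 1 : ℕ) →
      nuE p (i - p - (p : ℤ) ^ (N + 1)) = nuE p (i - p)) ∧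
    (((N + 1 : ℕ) : ℕ∞) < nuE p (i - p) →
      nuE p (i - p - (p : ℤ) ^ (N + 1)) = (N + 1 : ℕ)) ∧
    (((N + 1 : ℕ) : ℕ∞) ≤ nuE p (i - p) →
      ((N + 1 : ℕ) : ℕ∞) ≤ nuE p (i - p - (p : ℤ) ^ (N + 1))) := by
  have hself := nuE_self p
  have hpow := emultiplicity_pow_self_of_prime (Nat.prime_iff_prime_int.mp hp.out) (N + 1)
  simp only [nuE_eq_emultiplicity] at hself ⊢
  refine ⟨?_, fun h => ?_, fun h => ?_, fun h => ?_, fun h => ?_⟩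
  · rw [emultiplicity_eq_zero, emultiplicity_eq_zero, dvd_sub_self_right]
  · have : i = (i - p) + p := by ring
    rw [this, emultiplicity_add_of_gt (by rwa [hself]), hself]
  · rw [sub_eq_neg_add, emultiplicity_add_of_gt]
    rwa [emultiplicity_neg, hpow]
  · rw [emultiplicity_sub_of_gt (by rwa [hpow]), hpow]
  · exact le_emultiplicity_of_pow_dvd (dvd_sub (pow_dvd_of_le_emultiplicity h) dvd_rfl)

end Order

theorem enat_min_natCast (x y : ℕ) : min (x : ℕ∞) (y : ℕ∞) = ((min x y : ℕ) : ℕ∞) :=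
  (Nat.mono_cast.map_min).symm

/-- The case distinction of the statement, as arithmetic in `ℕ∞`: `a`, `b`, `d` are the
valuations of `i`, `i - p`, `i - p - p ^ (N + 1)` and `t` is that of `relTwo`. -/
theorem order_exponent (N n : ℕ) (hn : 2 ≤ n) (e : ℕ) (a b d : ℕ∞) {t : ℕ∞}
    (ht : b < (N : ℕ) + a → t = 1 + b)
    (ht' : ((N + 1 : ℕ) : ℕ∞) ≤ b →
      min ((N + 4 : ℕ) : ℕ∞) t = min ((N + 4 : ℕ) : ℕ∞) (1 + d))
    (hab : (a = 0 ↔ b = 0) ∧ (1 < b → a = 1) ∧ (b < (N + 1 : ℕ) → d = b) ∧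
      (((N + 1 : ℕ) : ℕ∞) < b → d = (N + 1 : ℕ)) ∧
      (((N + 1 : ℕ) : ℕ∞) ≤ b → ((N + 1 : ℕ) : ℕ∞) ≤ d))
    (h0 : a = 0 → (e : ℕ∞) = min ((n - 1 : ℕ) : ℕ∞) 2)
    (h1 : b = 1 → (e : ℕ∞) = min (n : ℕ∞) (a + 3))
    (h2 : 1 < b → 4 ≤ n → (e : ℕ∞) = min ((n + N : ℕ) : ℕ∞) (b + 3))
    (h3 : 1 < b → 2 ≤ n → n ≤ 3 →
      (e : ℕ∞) = min ((4 + N : ℕ) : ℕ∞) (d + ((n - 1 : ℕ) : ℕ∞)))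
    (hN : 2 ≤ N) :
    (e : ℕ∞) = min (min (((n + N : ℕ) : ℕ∞) + (1 + a)) (((n - 2 : ℕ) : ℕ∞) + t))
      ((1 + b) + (1 + a)) := by
  obtain ⟨hab0, hab1, hd, hd', hd''⟩ := hab
  have ha3 : (3 : ℕ∞) = ((3 : ℕ) : ℕ∞) := rfl
  have ha2 : (2 : ℕ∞) = ((2 : ℕ) : ℕ∞) := rfl
  have ha1 : (1 : ℕ∞) = ((1 : ℕ) : ℕ∞) := rfl
  have ha0 : (0 : ℕ∞) = ((0 : ℕ) : ℕ∞) := rfl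
  rw [ha0] at hab0 h0
  rw [ha1] at ht ht' hab1 h1 h2 h3 ⊢
  rw [ha2] at h0
  rw [ha3] at h1 h2
  induction a using ENat.recTopCoe <;> induction b using ENat.recTopCoe <;>
    induction d using ENat.recTopCoe <;> induction t using ENat.recTopCoe <;>
    simp only [top_add, add_top, min_top_right, min_top_left, ENat.natCast_ne_top, ENat.top_ne_natCast,
      ← Nat.cast_add, enat_min_natCast, Nat.cast_inj, Nat.cast_lt, Nat.cast_le, ENat.natCast_lt_top,
      not_top_lt, le_top, true_imp_iff, false_imp_iff, imp_false, not_true_eq_false, false_iff] at * <;> grind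

/-- Davis' Proposition 6.6a (case `ε = 2`): even-degree `v₁`-periodic homotopy groups of a
space whose `K`-theory looks like an `S^{2n+1}`-bundle over `S^{2n+1+2p(p-1)}` with
attaching map `α_p` detected with divisibility `p²`. -/
theorem stmt5 (p : ℕ) [Fact p.Prime] (hodd : Odd p) (r : ℤ)
    (hr : ∀ v : (ZMod (p ^ 2))ˣ, ∃ j : ℕ, (v : ZMod (p ^ 2)) = (r : ZMod (p ^ 2)) ^ j)
    (u : ZLoc p) (hu : IsUnit u)
    (n : ℕ) (hn : 2 ≤ n) (m : ℤ) :
    (¬ ((p : ℤ) - 1 ∣ m - n) →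
      Subsingleton (QuotMod2 p
        {![0, (p : ℚ) ^ (n + p * (p - 1))],
         ![(p : ℚ) ^ n, (u : ℚ) * (p : ℚ) ^ (n - 2) * ((p : ℚ) ^ (p * (p - 1)) - 1)],
         ![0, (r : ℚ) ^ (n + p * (p - 1)) - (r : ℚ) ^ m],
         ![(r : ℚ) ^ n - (r : ℚ) ^ m,
           ((u : ℚ) / (p : ℚ) ^ 2) * (r : ℚ) ^ n * ((r : ℚ) ^ (p * (p - 1)) - 1)]})) ∧
    (∀ i : ℤ, m = n + ((p : ℤ) - 1) * i → ∀ e : ℕ,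
      (nuE p i = 0 → (e : ℕ∞) = min ((n - 1 : ℕ) : ℕ∞) 2) →
      (nuE p (i - p) = 1 → (e : ℕ∞) = min (n : ℕ∞) (nuE p i + 3)) →
      (1 < nuE p (i - p) → 4 ≤ n →
        (e : ℕ∞) = min ((n + p * (p - 1) : ℕ) : ℕ∞) (nuE p (i - p) + 3)) →
      (1 < nuE p (i - p) → 2 ≤ n → n ≤ 3 →
        (e : ℕ∞) = min ((4 + p * (p - 1) : ℕ) : ℕ∞)
          (nuE p (i - p - (p : ℤ) ^ (p * (p - 1) + 1)) + ((n - 1 : ℕ) : ℕ∞))) →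
      Nonempty ((QuotMod2 p
        {![0, (p : ℚ) ^ (n + p * (p - 1))],
         ![(p : ℚ) ^ n, (u : ℚ) * (p : ℚ) ^ (n - 2) * ((p : ℚ) ^ (p * (p - 1)) - 1)],
         ![0, (r : ℚ) ^ (n + p * (p - 1)) - (r : ℚ) ^ m],
         ![(r : ℚ) ^ n - (r : ℚ) ^ m,
           ((u : ℚ) / (p : ℚ) ^ 2) * (r : ℚ) ^ n * ((r : ℚ) ^ (p * (p - 1)) - 1)]}) ≃+
        ZMod (p ^ e))) := by
  obtain ⟨ρ, hρ, ho⟩ := exists_unit_of_generator hodd hr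
  obtain ⟨U, hU⟩ := isUnit_intCast_ZLoc (not_dvd_of_generator hρ ho)
  have hNcast : ((p * (p - 1) : ℕ) : ℤ) = ((p : ℤ) - 1) * p := by
    rw [Nat.cast_mul, Nat.cast_pred (Fact.out : p.Prime).pos]; ring
  constructor
  · intro hdvd
    have hα := emultiplicity_zpow_sub_one_of_not_dvd hρ ho hU hdvd
    have hβ := emultiplicity_zpow_sub_one_of_not_dvd hρ ho hU
      (k := m - n - (p * (p - 1) : ℕ)) (fun h => hdvd (by
        rw [hNcast] at h
        have := dvd_add h (dvd_mul_right ((p : ℤ) - 1) p)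
        rwa [sub_add_cancel] at this))
    obtain ⟨φ⟩ := quot_equiv_of_min hodd hρ ho hU u hu n hn m (m - n) (by ring) 0 _ _ hα hβ
      (by simp)
    have : Subsingleton (ZMod (p ^ 0)) := by
      rw [pow_zero]; infer_instance
    exact φ.toEquiv.subsingleton
  · intro i hm e h0 h1 h2 h3
    have hα := emultiplicity_zpow_sub_one hodd hρ ho hU i
    have hβ := emultiplicity_zpow_sub_one hodd hρ ho hU (i - p)
    rw [mul_sub, ← hNcast] at hβ
    refine quot_equiv_of_min hodd hρ ho hU u hu n hn m _ hm e _ _ hα hβ ?_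
    apply order_exponent _ _ hn _ _ _ _ (emultiplicity_relTwo_of_lt hodd hρ ho hU i)
      (min_emultiplicity_relTwo hodd hρ ho hU i) (nuE_relations p (p * (p - 1)) i) h0 h1 h2 h3
    have := (Fact.out : p.Prime).two_le
    exact this.trans (Nat.le_mul_of_pos_right _ (by omega))

end
end
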